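/- arXiv:2004.07163 — 6 statements merged into one kernel-verified Lean document; each statement's English description precedes it below -/
import Mathlib

section
/- Let n ≥ 1 and m ≥ 1, and let T : Fin n → Fin n → Fin n → EuclideanSpace ℝ (Fin m) be totally symmetric, i.e. T i j k is unchanged under every permutation of the three indices (i,j,k). Then Σ_{i,j,k} ‖T i j k‖² ≥ (3/(n+2)) · Σ_i ‖Σ_j T i j j‖². -/
/-!
The inequality is the nonnegativity of the squared norm of the trace-free part of `T`.
Working in each coordinate of the target separately, let `t` be a symmetric real 3-tensor with trace
`H i = ∑ j, t i j j`, and put `E i j k = c (δ i j H k + δ i k H j + δ j k H i)` with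
`c = 1 / (n + 2)`. Then `⟨t, E⟩ = 3 c |H|²` and `|E|² = c² (3 n + 6) |H|² = 3 c |H|²`, so that
`0 ≤ |t - E|² = |t|² - 3 c |H|²`. Summing over the coordinates gives the claim.
-/

/-- The expansion of `|t - E|²` for an arbitrary constant `c` in the definition of `E`. -/
lemma sum_sq_sub_trace_part (n : ℕ) (t : Fin n → Fin n → Fin n → ℝ)
    (h12 : ∀ i j k, t j i k = t i j k) (h23 : ∀ i j k, t i k j = t i j k)
    (H : Fin n → ℝ) (hH : ∀ i, H i = ∑ j, t i j j) (c : ℝ) :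
    ∑ i, ∑ j, ∑ k, (t i j k - c * ((if i = j then H k else 0) + (if i = k then H j else 0)
      + (if j = k then H i else 0))) ^ 2
    = ∑ i, ∑ j, ∑ k, t i j k ^ 2 + (c ^ 2 * (3 * n + 6) - 6 * c) * ∑ i, H i ^ 2 := by
  have expand : ∀ i j k, (t i j k - c * ((if i = j then H k else 0) + (if i = k then H j else 0)
      + (if j = k then H i else 0))) ^ 2
      = t i j k ^ 2
        - 2 * c * ((if i = j then t i j k * H k else 0) + (if i = k then t i j k * H j else 0)
          + (if j = k then t i j k * H i else 0))
        + c ^ 2 * ((if i = j then H k ^ 2 else 0) + (if i = k then H j ^ 2 else 0)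
          + (if j = k then H i ^ 2 else 0)
          + 2 * (if i = j then (if i = k then H k * H j else 0) else 0)
          + 2 * (if i = j then (if j = k then H k * H i else 0) else 0)
          + 2 * (if i = k then (if j = k then H j * H i else 0) else 0)) := by
    intro i j k
    split_ifs <;> ring
  have inner_jk : ∑ i, ∑ j, ∑ k, (if j = k then t i j k * H i else 0) = ∑ i, H i ^ 2 := by
    refine Finset.sum_congr rfl fun i _ => ?_
    simp only [Finset.sum_ite_eq, Finset.mem_univ, if_true]
    rw [← Finset.sum_mul, ← hH, sq]
  have inner_ik : ∑ i, ∑ j, ∑ k, (if i = k then t i j k * H j else 0) = ∑ i, H i ^ 2 := by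
    rw [Finset.sum_comm, ← inner_jk]
    simp only [h12]
  have inner_ij : ∑ i, ∑ j, ∑ k, (if i = j then t i j k * H k else 0) = ∑ i, H i ^ 2 := by
    rw [← inner_ik]
    refine Finset.sum_congr rfl fun i _ => ?_
    rw [Finset.sum_comm]
    simp only [h23]
  have norm_ij : ∑ i : Fin n, ∑ j, ∑ k, (if i = j then H k ^ 2 else 0) = n * ∑ i, H i ^ 2 := by
    simp
  have norm_ik : ∑ i : Fin n, ∑ j, ∑ k, (if i = k then H j ^ 2 else 0) = n * ∑ i, H i ^ 2 := by
    simp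
  have norm_jk : ∑ i : Fin n, ∑ j : Fin n, ∑ k, (if j = k then H i ^ 2 else 0)
      = n * ∑ i, H i ^ 2 := by
    simp [Finset.mul_sum]
  have cross₁ : ∑ i : Fin n, ∑ j, ∑ k, (if i = j then (if i = k then H k * H j else 0) else 0)
      = ∑ i, H i ^ 2 := by
    simp [Finset.sum_ite_irrel, sq]
  have cross₂ : ∑ i : Fin n, ∑ j, ∑ k, (if i = j then (if j = k then H k * H i else 0) else 0)
      = ∑ i, H i ^ 2 := by
    simp [Finset.sum_ite_irrel, sq]
  have cross₃ : ∑ i : Fin n, ∑ j, ∑ k, (if i = k then (if j = k then H j * H i else 0) else 0)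
      = ∑ i, H i ^ 2 := by
    simp [sq]
  simp only [expand, Finset.sum_add_distrib, Finset.sum_sub_distrib, ← Finset.mul_sum,
    inner_jk, inner_ik, inner_ij, norm_ij, norm_ik, norm_jk, cross₁, cross₂, cross₃]
  ring

lemma kato_scalar (n : ℕ) (t : Fin n → Fin n → Fin n → ℝ)
    (h12 : ∀ i j k, t j i k = t i j k) (h23 : ∀ i j k, t i k j = t i j k) :
    (3 / ((n : ℝ) + 2)) * ∑ i, (∑ j, t i j j) ^ 2 ≤ ∑ i, ∑ j, ∑ k, t i j k ^ 2 := by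
  have key := sum_sq_sub_trace_part n t h12 h23 (fun i => ∑ j, t i j j) (fun _ => rfl)
    (1 / ((n : ℝ) + 2))
  have hc : (1 / ((n : ℝ) + 2)) ^ 2 * (3 * n + 6) - 6 * (1 / ((n : ℝ) + 2))
      = -(3 / ((n : ℝ) + 2)) := by
    have : (n : ℝ) + 2 ≠ 0 := by positivity
    field_simp
    ring
  rw [hc] at key
  have nonneg := key.symm.trans_ge
    (Finset.sum_nonneg fun i _ => Finset.sum_nonneg fun j _ => Finset.sum_nonneg fun k _ =>
      sq_nonneg _)
  linarith

/-- Kato-type inequality: for a totally symmetric 3-tensor `T` with values in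
`EuclideanSpace ℝ (Fin m)`, one has `∑ ‖T i j k‖² ≥ (3/(n+2)) ∑ ‖∑_j T i j j‖²`. -/
theorem stmt0 (n m : ℕ) (hn : 1 ≤ n) (hm : 1 ≤ m)
    (T : Fin n → Fin n → Fin n → EuclideanSpace ℝ (Fin m))
    (hsymm : ∀ (σ : Equiv.Perm (Fin 3)) (f : Fin 3 → Fin n),
      T (f (σ 0)) (f (σ 1)) (f (σ 2)) = T (f 0) (f 1) (f 2)) :
    (3 / ((n : ℝ) + 2)) * ∑ i, ‖∑ j, T i j j‖ ^ 2 ≤ ∑ i, ∑ j, ∑ k, ‖T i j k‖ ^ 2 := by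
  have h12 : ∀ i j k, T j i k = T i j k := fun i j k => hsymm (Equiv.swap 0 1) ![i, j, k]
  have h23 : ∀ i j k, T i k j = T i j k := fun i j k => hsymm (Equiv.swap 1 2) ![i, j, k]
  have coord : ∀ a : Fin m, (3 / ((n : ℝ) + 2)) * ∑ i, (∑ j, T i j j a) ^ 2
      ≤ ∑ i, ∑ j, ∑ k, T i j k a ^ 2 := fun a =>
    kato_scalar n (fun i j k => T i j k a) (fun i j k => by rw [h12]) (fun i j k => by rw [h23])
  have lhs : ∑ i, ‖∑ j, T i j j‖ ^ 2 = ∑ a, ∑ i, (∑ j, T i j j a) ^ 2 := by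
    rw [Finset.sum_comm]
    simp [EuclideanSpace.real_norm_sq_eq]
  have rhs : ∑ i, ∑ j, ∑ k, ‖T i j k‖ ^ 2 = ∑ a, ∑ i, ∑ j, ∑ k, T i j k a ^ 2 := by
    simp only [EuclideanSpace.real_norm_sq_eq]
    simp only [Finset.sum_comm (s := (Finset.univ : Finset (Fin n)))
      (t := (Finset.univ : Finset (Fin m)))]
  rw [lhs, rhs, Finset.mul_sum]
  exact Finset.sum_le_sum fun a _ => coord a
end

section
/- Let n ≥ 2, m ≥ 1, and let (h_α)_{α ∈ Fin m} be a family of symmetric real n×n matrices. Set H_α := tr h_α, |H|² := Σ_α H_α², |A|² := Σ_α Σ_{i,j} ((h_α)_{ij})², and define R₁ := Σ_{α,β} (Σ_{i,j} (h_α)_{ij}(h_β)_{ij})² + Σ_{i,j,α,β} (Σ_p ((h_α)_{ip}(h_β)_{jp} − (h_β)_{ip}(h_α)_{jp}))² and R₂ := Σ_{i,j} (Σ_α H_α (h_α)_{ij})². If 0 < c ≤ 4/(3n) and |A|² ≤ c|H|², then R₁ ≤ c·R₂. -/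
/-!
Split the second fundamental form along the mean curvature direction. If `H = 0` the pinching forces
`h = 0`. Otherwise put `u = H / |H|`, `a = ∑ α, u α • h α` and `g α = h α - u α • a`; the `g α` are
trace free, `∑ α, u α • g α = 0`, and orthogonality of the splitting gives
`R₁ = |a|⁴ + 2 ∑ α, (⟨a, g α⟩² + |[a, g α]|²) + ∑ α β, (⟨g α, g β⟩² + |[g α, g β]|²)`,
together with `|A|² = |a|² + ∑ α, |g α|²` and `R₂ = |H|² |a|²`.
Since `g α` is trace free, `a` may be replaced by its trace-free part `a₀`, with
`|a₀|² = |a|² - |H|² / n`, in the middle sum.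

The only matrix inequality needed is `⟨a, b⟩² + |[a, b]|² ≤ 2 |a|² |b|²` for symmetric `a`, `b`
(`frob_sq_add_comm_sq_le`), proved by diagonalising `a`. With `x = |a|²`, `y = |H|² / n` and
`b = ∑ α, |g α|²` it yields `R₁ ≤ x² + 4 (x - y) b + 2 b²`, while the pinching says
`x + b ≤ c |H|² ≤ 4 y / 3`. Hence `R₁ - c R₂ ≤ b (3 x - 4 y + 2 b) ≤ 0`.
-/

open Matrix

namespace Pinching

variable {ι κ : Type*} [Fintype ι] [Fintype κ]

/-- The Frobenius inner product of two real square matrices. -/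
def frob (a b : Matrix ι ι ℝ) : ℝ := ∑ i, ∑ j, a i j * b i j

/-- The matrix `a bᵀ - b aᵀ`, which is the commutator when `a` and `b` are symmetric. -/
def commut (a b : Matrix ι ι ℝ) : Matrix ι ι ℝ := a * bᵀ - b * aᵀ

lemma frob_eq_trace (a b : Matrix ι ι ℝ) : frob a b = trace (a * bᵀ) := by
  simp [frob, trace, mul_apply]

lemma frob_comm (a b : Matrix ι ι ℝ) : frob a b = frob b a := by
  simp [frob, mul_comm]

lemma frob_self_nonneg (a : Matrix ι ι ℝ) : 0 ≤ frob a a :=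
  Finset.sum_nonneg fun _ _ => Finset.sum_nonneg fun _ _ => mul_self_nonneg _

lemma frob_add_left (a b d : Matrix ι ι ℝ) : frob (a + b) d = frob a d + frob b d := by
  simp [frob_eq_trace, add_mul]

lemma frob_smul_left (r : ℝ) (a d : Matrix ι ι ℝ) : frob (r • a) d = r * frob a d := by
  simp [frob_eq_trace]

lemma frob_add_right (a b d : Matrix ι ι ℝ) : frob d (a + b) = frob d a + frob d b := by
  simp [frob_eq_trace, mul_add]

lemma frob_smul_right (r : ℝ) (a d : Matrix ι ι ℝ) : frob d (r • a) = r * frob d a := by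
  simp [frob_eq_trace]

lemma sum_frob_self (f : κ → Matrix ι ι ℝ) :
    ∑ α, frob (f α) (f α) = ∑ i, ∑ j, ∑ α, f α i j ^ 2 := by
  simp only [frob, ← sq]
  rw [Finset.sum_comm]
  exact Finset.sum_congr rfl fun i _ => Finset.sum_comm

lemma frob_sum_right (u : κ → ℝ) (g : κ → Matrix ι ι ℝ) (d : Matrix ι ι ℝ) :
    frob d (∑ α, u α • g α) = ∑ α, u α * frob d (g α) := by
  simp [frob_eq_trace, Matrix.mul_sum, transpose_sum, trace_sum]

lemma comm_sum_right (u : κ → ℝ) (g : κ → Matrix ι ι ℝ) (d : Matrix ι ι ℝ) :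
    commut d (∑ α, u α • g α) = ∑ α, u α • commut d (g α) := by
  simp [commut, Matrix.mul_sum, Matrix.sum_mul, transpose_sum, smul_sub]

lemma comm_swap (a b : Matrix ι ι ℝ) : commut a b = -commut b a := by
  simp [commut]

lemma frob_conj [DecidableEq ι] {U : Matrix ι ι ℝ} (h1 : U * Uᵀ = 1)
    (a b : Matrix ι ι ℝ) : frob (Uᵀ * a * U) (Uᵀ * b * U) = frob a b := by
  rw [frob_eq_trace, frob_eq_trace]
  have : Uᵀ * a * U * (Uᵀ * b * U)ᵀ = Uᵀ * (a * bᵀ * U) := by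
    simp only [transpose_mul, transpose_transpose]
    calc Uᵀ * a * U * (Uᵀ * (bᵀ * U)) = Uᵀ * a * (U * Uᵀ) * (bᵀ * U) := by
          simp only [Matrix.mul_assoc]
      _ = _ := by rw [h1, Matrix.mul_one]; simp only [Matrix.mul_assoc]
  rw [this, trace_mul_comm, Matrix.mul_assoc, h1, Matrix.mul_one]

lemma comm_conj [DecidableEq ι] {U : Matrix ι ι ℝ} (h1 : U * Uᵀ = 1)
    (a b : Matrix ι ι ℝ) : commut (Uᵀ * a * U) (Uᵀ * b * U) = Uᵀ * commut a b * U := by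
  have key : ∀ a b : Matrix ι ι ℝ, Uᵀ * a * U * (Uᵀ * b * U)ᵀ = Uᵀ * (a * bᵀ) * U := by
    intro a b
    simp only [transpose_mul, transpose_transpose]
    calc Uᵀ * a * U * (Uᵀ * (bᵀ * U)) = Uᵀ * a * (U * Uᵀ) * (bᵀ * U) := by
          simp only [Matrix.mul_assoc]
      _ = _ := by rw [h1, Matrix.mul_one]; simp only [Matrix.mul_assoc]
  simp only [commut, key, Matrix.mul_sub, Matrix.sub_mul]

/-- The case of a diagonal first argument. The diagonal of `b` only enters `⟨a, b⟩`, estimated by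
Cauchy–Schwarz; the off-diagonal part only enters the commutator, whose entries are
`(dᵢ - dⱼ) bᵢⱼ` with `(dᵢ - dⱼ)² ≤ 2 |d|²`. -/
lemma frob_sq_add_comm_sq_le_diagonal [DecidableEq ι] (d : ι → ℝ) (b : Matrix ι ι ℝ)
    (hb : b.IsSymm) :
    frob (diagonal d) b ^ 2 + frob (commut (diagonal d) b) (commut (diagonal d) b)
      ≤ 2 * frob (diagonal d) (diagonal d) * frob b b := by
  have e1 : frob (diagonal d) b = ∑ i, d i * b i i := by
    simp [frob, diagonal_apply]
  have e2 : frob (diagonal d) (diagonal d) = ∑ i, d i ^ 2 := by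
    simp [frob, diagonal_apply, sq]
  have e3 : frob (commut (diagonal d) b) (commut (diagonal d) b)
      = ∑ i, ∑ j, ((d i - d j) * b i j) ^ 2 := by
    unfold frob commut
    refine Finset.sum_congr rfl fun i _ => Finset.sum_congr rfl fun j _ => ?_
    rw [hb.eq, diagonal_transpose, Matrix.sub_apply, diagonal_mul, mul_diagonal]
    ring
  set D := ∑ i, d i ^ 2 with hD
  have hD0 : 0 ≤ D := Finset.sum_nonneg fun _ _ => sq_nonneg _
  have cs : (∑ i, d i * b i i) ^ 2 ≤ D * ∑ i, b i i ^ 2 :=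
    Finset.sum_mul_sq_le_sq_mul_sq _ _ _
  have entry : ∀ i j, ((d i - d j) * b i j) ^ 2 + (if i = j then D * b i j ^ 2 else 0)
      ≤ 2 * D * b i j ^ 2 := by
    intro i j
    by_cases hij : i = j
    · subst hij
      simp only [sub_self, zero_mul, if_true]
      nlinarith [mul_nonneg hD0 (sq_nonneg (b i i))]
    · have hle : d i ^ 2 + d j ^ 2 ≤ D := by
        rw [← Finset.sum_pair (f := fun k => d k ^ 2) hij]
        exact Finset.sum_le_sum_of_subset_of_nonneg (Finset.subset_univ _)
          fun _ _ _ => sq_nonneg _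
      have : (d i - d j) ^ 2 ≤ 2 * D := by nlinarith [sq_nonneg (d i + d j)]
      rw [if_neg hij, add_zero, mul_pow]
      exact mul_le_mul_of_nonneg_right this (sq_nonneg _)
  have hsum := Finset.sum_le_sum fun i (_ : i ∈ Finset.univ) =>
    Finset.sum_le_sum fun j (_ : j ∈ Finset.univ) => entry i j
  simp only [Finset.sum_add_distrib, Finset.sum_ite_eq, Finset.mem_univ, if_true,
    ← Finset.mul_sum] at hsum
  have e4 : frob b b = ∑ i, ∑ j, b i j ^ 2 := by simp [frob, sq]
  rw [e1, e2, e3, e4]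
  linarith

/-- A strengthened Böttcher–Wenzel inequality for symmetric matrices. Both sides are invariant
under simultaneous orthogonal conjugation, so `a` can be taken diagonal. -/
lemma frob_sq_add_comm_sq_le [DecidableEq ι] (a b : Matrix ι ι ℝ) (ha : a.IsSymm)
    (hb : b.IsSymm) :
    frob a b ^ 2 + frob (commut a b) (commut a b) ≤ 2 * frob a a * frob b b := by
  have hA : a.IsHermitian := by
    rw [IsHermitian, conjTranspose_eq_transpose_of_trivial]; exact ha
  set U : Matrix ι ι ℝ := (hA.eigenvectorUnitary : Matrix ι ι ℝ) with hU
  have h1 : U * Uᵀ = 1 := by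
    have := (mem_unitaryGroup_iff (A := U)).1 hA.eigenvectorUnitary.2
    rwa [star_eq_conjTranspose, conjTranspose_eq_transpose_of_trivial] at this
  have hdiag : Uᵀ * a * U = diagonal hA.eigenvalues := by
    have := hA.conjStarAlgAut_star_eigenvectorUnitary
    rw [Unitary.conjStarAlgAut_star_apply] at this
    simpa [star_eq_conjTranspose, conjTranspose_eq_transpose_of_trivial] using this
  have hb' : (Uᵀ * b * U).IsSymm := by
    rw [IsSymm]
    simp only [transpose_mul, transpose_transpose, hb.eq, Matrix.mul_assoc]
  have := frob_sq_add_comm_sq_le_diagonal hA.eigenvalues (Uᵀ * b * U) hb'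
  rw [← hdiag] at this
  simpa only [comm_conj h1, frob_conj h1] using this

/-- Pythagoras for a bilinear array split along a unit vector `u` in both indices. -/
lemma sum_sq_split (u p q : κ → ℝ) (w : κ → κ → ℝ) (x : ℝ) (hu : ∑ α, u α ^ 2 = 1)
    (hp : ∑ α, u α * p α = 0) (hq : ∑ α, u α * q α = 0)
    (hw1 : ∀ β, ∑ α, u α * w α β = 0) (hw2 : ∀ α, ∑ β, u β * w α β = 0) :
    ∑ α, ∑ β, (u α * u β * x + u α * p β + u β * q α + w α β) ^ 2
      = x ^ 2 + ∑ α, p α ^ 2 + ∑ α, q α ^ 2 + ∑ α, ∑ β, w α β ^ 2 := by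
  have inner : ∀ α, ∑ β, (u α * u β * x + u α * p β + u β * q α + w α β) ^ 2
      = (u α * x + q α) ^ 2 + u α ^ 2 * ∑ β, p β ^ 2 + 2 * ∑ β, p β * (u α * w α β)
        + ∑ β, w α β ^ 2 := by
    intro α
    have : ∀ β, (u α * u β * x + u α * p β + u β * q α + w α β) ^ 2
        = (u α * x + q α) ^ 2 * u β ^ 2 + u α ^ 2 * p β ^ 2 + 2 * (p β * (u α * w α β))
          + w α β ^ 2 + 2 * (u α * x + q α) * u α * (u β * p β)
          + 2 * (u α * x + q α) * (u β * w α β) := by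
      intro β; ring
    simp only [this, Finset.sum_add_distrib, ← Finset.mul_sum, hu, hp, hw2]
    ring
  have cross : ∑ α, ∑ β, p β * (u α * w α β) = 0 := by
    rw [Finset.sum_comm]
    simp [← Finset.mul_sum, hw1]
  have outer : ∀ α, (u α * x + q α) ^ 2 = x ^ 2 * u α ^ 2 + q α ^ 2 + 2 * x * (u α * q α) := by
    intro α; ring
  simp only [inner, Finset.sum_add_distrib, ← Finset.mul_sum, ← Finset.sum_mul, cross, outer,
    hu, hq]
  ring

/-- The estimate of `R₁` after splitting `h α = u α • a + g α` along a unit vector `u`, where `a₀`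
is a symmetric matrix with the same inner products and commutators with the `g α` as `a`. -/
lemma reaction_le [DecidableEq ι] (u : κ → ℝ) (hu : ∑ α, u α ^ 2 = 1)
    (a a₀ : Matrix ι ι ℝ) (g : κ → Matrix ι ι ℝ)
    (ha₀ : a₀.IsSymm) (hg : ∀ α, (g α).IsSymm) (hug : ∑ α, u α • g α = 0)
    (hf : ∀ α, frob a (g α) = frob a₀ (g α)) (hc : ∀ α, commut a (g α) = commut a₀ (g α)) :
    ∑ α, ∑ β, frob (u α • a + g α) (u β • a + g β) ^ 2
      + ∑ i, ∑ j, ∑ α, ∑ β, commut (u α • a + g α) (u β • a + g β) i j ^ 2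
      ≤ frob a a ^ 2 + 4 * frob a₀ a₀ * ∑ α, frob (g α) (g α)
        + 2 * (∑ α, frob (g α) (g α)) ^ 2 := by
  have hf0 : ∀ d : Matrix ι ι ℝ, ∑ α, u α * frob d (g α) = 0 := by
    intro d
    rw [← frob_sum_right, hug]
    simp [frob]
  have hc0 : ∀ (d : Matrix ι ι ℝ) (i j : ι), ∑ α, u α * commut d (g α) i j = 0 := by
    intro d i j
    have := congrFun (congrFun (comm_sum_right u g d) i) j
    rw [hug] at this
    simpa [commut, Matrix.sum_apply] using this.symm
  have s1 : ∑ α, ∑ β, frob (u α • a + g α) (u β • a + g β) ^ 2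
      = frob a a ^ 2 + 2 * ∑ α, frob a₀ (g α) ^ 2 + ∑ α, ∑ β, frob (g α) (g β) ^ 2 := by
    have := sum_sq_split u (fun α => frob a (g α)) (fun α => frob a (g α))
      (fun α β => frob (g α) (g β)) (frob a a) hu (hf0 a) (hf0 a)
      (fun β => by simpa only [frob_comm] using hf0 (g β)) (fun α => hf0 (g α))
    simp only [hf] at this
    rw [two_mul, ← add_assoc, ← this]
    refine Finset.sum_congr rfl fun α _ => Finset.sum_congr rfl fun β _ => ?_
    rw [frob_add_left, frob_add_right, frob_add_right, frob_smul_left, frob_smul_left,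
      frob_smul_right, frob_smul_right, frob_comm (g α) a, hf, hf]
    ring
  have s2 : ∀ i j, ∑ α, ∑ β, commut (u α • a + g α) (u β • a + g β) i j ^ 2
      = 2 * ∑ α, commut a₀ (g α) i j ^ 2 + ∑ α, ∑ β, commut (g α) (g β) i j ^ 2 := by
    intro i j
    have := sum_sq_split u (fun α => commut a₀ (g α) i j) (fun α => -commut a₀ (g α) i j)
      (fun α β => commut (g α) (g β) i j) 0 hu (hc0 a₀ i j)
      (by simpa using hc0 a₀ i j)
      (fun β => by
        simp only [fun α => comm_swap (g α) (g β), Matrix.neg_apply, mul_neg, Finset.sum_neg_distrib,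
          hc0, neg_zero])
      (fun α => hc0 (g α) i j)
    have e : 2 * ∑ α, commut a₀ (g α) i j ^ 2 + ∑ α, ∑ β, commut (g α) (g β) i j ^ 2
        = 0 ^ 2 + ∑ α, commut a₀ (g α) i j ^ 2 + ∑ α, (-commut a₀ (g α) i j) ^ 2
          + ∑ α, ∑ β, commut (g α) (g β) i j ^ 2 := by
      simp only [neg_sq]; ring
    rw [e, ← this]
    refine Finset.sum_congr rfl fun α _ => Finset.sum_congr rfl fun β _ => ?_
    have ex : commut (u α • a + g α) (u β • a + g β)
        = u α • commut a (g β) - u β • commut a (g α) + commut (g α) (g β) := by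
      simp only [commut, transpose_add, transpose_smul, Matrix.add_mul, Matrix.mul_add,
        Matrix.smul_mul, Matrix.mul_smul, smul_sub, smul_add, smul_smul, mul_comm (u β) (u α)]
      abel
    rw [ex, hc, hc]
    simp only [Matrix.add_apply, Matrix.sub_apply, Matrix.smul_apply, smul_eq_mul]
    ring
  have s3 : ∑ i, ∑ j, ∑ α, ∑ β, commut (u α • a + g α) (u β • a + g β) i j ^ 2
      = 2 * ∑ α, frob (commut a₀ (g α)) (commut a₀ (g α))
        + ∑ α, ∑ β, frob (commut (g α) (g β)) (commut (g α) (g β)) := by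
    have r1 := sum_frob_self fun α => commut a₀ (g α)
    have r2 := sum_frob_self fun q : κ × κ => commut (g q.1) (g q.2)
    simp only [Fintype.sum_prod_type] at r2
    rw [r1, r2]
    simp only [s2, Finset.sum_add_distrib, ← Finset.mul_sum]
  have b1 : ∑ α, frob a₀ (g α) ^ 2 + ∑ α, frob (commut a₀ (g α)) (commut a₀ (g α))
      ≤ 2 * frob a₀ a₀ * ∑ α, frob (g α) (g α) := by
    rw [← Finset.sum_add_distrib, Finset.mul_sum]
    exact Finset.sum_le_sum fun α _ => frob_sq_add_comm_sq_le _ _ ha₀ (hg α)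
  have b2 : ∑ α, ∑ β, frob (g α) (g β) ^ 2
      + ∑ α, ∑ β, frob (commut (g α) (g β)) (commut (g α) (g β))
      ≤ 2 * (∑ α, frob (g α) (g α)) ^ 2 := by
    rw [sq, Finset.sum_mul_sum, Finset.mul_sum]
    simp only [← Finset.sum_add_distrib, Finset.mul_sum]
    refine Finset.sum_le_sum fun α _ => Finset.sum_le_sum fun β _ => ?_
    rw [← mul_assoc]
    exact frob_sq_add_comm_sq_le _ _ (hg α) (hg β)
  rw [s1, s3]
  linarith

end Pinching

open Pinching in
/-- Reaction-term inequality: if `|A|² ≤ c|H|²` with `0 < c ≤ 4/(3n)`, then `R₁ ≤ c R₂`. -/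
theorem stmt1 (n m : ℕ) (hn : 2 ≤ n) (hm : 1 ≤ m)
    (h : Fin m → Matrix (Fin n) (Fin n) ℝ) (hsym : ∀ α, (h α).IsSymm)
    (c : ℝ) (hc0 : 0 < c) (hc : c ≤ 4 / (3 * (n : ℝ)))
    (hpinch : (∑ α, ∑ i, ∑ j, (h α i j) ^ 2) ≤ c * ∑ α, (Matrix.trace (h α)) ^ 2) :
    (∑ α, ∑ β, (∑ i, ∑ j, h α i j * h β i j) ^ 2)
      + (∑ i, ∑ j, ∑ α, ∑ β, (∑ p, (h α i p * h β j p - h β i p * h α j p)) ^ 2)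
      ≤ c * ∑ i, ∑ j, (∑ α, Matrix.trace (h α) * h α i j) ^ 2 := by
  have hn0 : (0 : ℝ) < n := by exact_mod_cast (by omega : 0 < n)
  have hS0 : 0 ≤ ∑ α, (trace (h α)) ^ 2 := Finset.sum_nonneg fun _ _ => sq_nonneg _
  have hA : ∑ α, ∑ i, ∑ j, (h α i j) ^ 2 = ∑ α, frob (h α) (h α) := by
    simp only [frob, sq]
  rcases hS0.eq_or_lt with hS | hS
  · -- `H = 0`: the pinching forces `h = 0`
    rw [← hS, mul_zero] at hpinch
    have hz : ∀ α i j, h α i j = 0 := by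
      intro α i j
      by_contra hne
      have h1 : h α i j ^ 2 ≤ ∑ j, h α i j ^ 2 :=
        Finset.single_le_sum (f := fun j => h α i j ^ 2) (fun _ _ => sq_nonneg _)
          (Finset.mem_univ j)
      have h2 : ∑ j, h α i j ^ 2 ≤ ∑ i, ∑ j, h α i j ^ 2 :=
        Finset.single_le_sum (f := fun i => ∑ j, h α i j ^ 2)
          (fun _ _ => Finset.sum_nonneg fun _ _ => sq_nonneg _) (Finset.mem_univ i)
      have h3 : ∑ i, ∑ j, h α i j ^ 2 ≤ ∑ α, ∑ i, ∑ j, h α i j ^ 2 :=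
        Finset.single_le_sum (f := fun α => ∑ i, ∑ j, h α i j ^ 2)
          (fun _ _ => Finset.sum_nonneg fun _ _ => Finset.sum_nonneg fun _ _ => sq_nonneg _)
          (Finset.mem_univ α)
      have : 0 < h α i j ^ 2 := by positivity
      linarith
    simp [hz]
  obtain ⟨s, hs, hs2⟩ : ∃ s : ℝ, 0 < s ∧ s ^ 2 = ∑ α, (trace (h α)) ^ 2 :=
    ⟨√(∑ α, (trace (h α)) ^ 2), Real.sqrt_pos.2 hS, Real.sq_sqrt hS0⟩
  obtain ⟨u, hu⟩ : ∃ u : Fin m → ℝ, ∀ α, trace (h α) = s * u α :=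
    ⟨fun α => trace (h α) / s, fun α => by field_simp⟩
  have huu : ∑ α, u α ^ 2 = 1 := by
    simp only [hu, mul_pow, ← Finset.mul_sum] at hs2
    have : s ^ 2 ≠ 0 := by positivity
    exact mul_left_cancel₀ this (by linarith)
  set a : Matrix (Fin n) (Fin n) ℝ := ∑ α, u α • h α with ha
  set g : Fin m → Matrix (Fin n) (Fin n) ℝ := fun α => h α - u α • a with hg
  set a₀ : Matrix (Fin n) (Fin n) ℝ := a - (s / n) • (1 : Matrix (Fin n) (Fin n) ℝ) with ha₀
  have hsplit : ∀ α, h α = u α • a + g α := by intro α; simp [hg]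
  have hasym : a.IsSymm := by
    rw [IsSymm, ha, transpose_sum]
    exact Finset.sum_congr rfl fun α _ => by rw [transpose_smul, (hsym α).eq]
  have hgsym : ∀ α, (g α).IsSymm := by
    intro α
    simp only [hg, IsSymm, transpose_sub, transpose_smul, hasym.eq, (hsym α).eq]
  have ha₀sym : a₀.IsSymm := by
    simp only [ha₀, IsSymm, transpose_sub, transpose_smul, hasym.eq, transpose_one]
  have hug : ∑ α, u α • g α = 0 := by
    simp only [hg, smul_sub, smul_smul, Finset.sum_sub_distrib, ← Finset.sum_smul, ← sq, huu,
      one_smul]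
    rw [← ha, sub_self]
  have htra : trace a = s := by
    rw [ha, trace_sum]
    simp only [trace_smul, hu, smul_eq_mul]
    calc ∑ α, u α * (s * u α) = s * ∑ α, u α ^ 2 := by
          rw [Finset.mul_sum]; exact Finset.sum_congr rfl fun _ _ => by ring
      _ = s := by rw [huu, mul_one]
  have htrg : ∀ α, trace (g α) = 0 := by
    intro α
    simp only [hg, trace_sub, trace_smul, htra, hu, smul_eq_mul]
    ring
  have haa₀ : a = a₀ + (s / n) • 1 := by simp [ha₀]
  have hone : ∀ b : Matrix (Fin n) (Fin n) ℝ, frob 1 b = trace b := by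
    intro b; rw [frob_eq_trace, one_mul, trace_transpose]
  have hf : ∀ α, frob a (g α) = frob a₀ (g α) := by
    intro α
    rw [haa₀, frob_add_left, frob_smul_left, hone, htrg]; ring
  have hcm : ∀ α, commut a (g α) = commut a₀ (g α) := by
    intro α
    rw [haa₀]
    simp [commut, Matrix.add_mul, Matrix.mul_add, (hgsym α).eq]
  have hfa₀ : frob a₀ a₀ = frob a a - s ^ 2 / n := by
    have htr0 : trace a₀ = 0 := by
      simp only [ha₀, trace_sub, trace_smul, htra, trace_one, Fintype.card_fin, smul_eq_mul]
      field_simp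
      ring
    have : frob a a = frob a₀ a₀ + s ^ 2 / n := by
      conv_lhs => rw [haa₀]
      rw [frob_add_left, frob_add_right, frob_add_right, frob_smul_left, frob_smul_left,
        frob_smul_right, frob_smul_right, frob_comm a₀ 1, hone, hone, htr0, trace_one,
        Fintype.card_fin]
      field_simp
      ring
    linarith
  have hsum : ∑ α, frob (h α) (h α) = frob a a + ∑ α, frob (g α) (g α) := by
    have e : ∀ α, frob (h α) (h α)
        = u α ^ 2 * frob a a + 2 * (u α * frob a (g α)) + frob (g α) (g α) := by
      intro α
      rw [hsplit α, frob_add_left, frob_add_right, frob_add_right, frob_smul_left,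
        frob_smul_left, frob_smul_right, frob_smul_right, frob_comm (g α) a]
      ring
    have z : ∑ α, u α * frob a (g α) = 0 := by
      rw [← frob_sum_right, hug]; simp [frob]
    simp only [e, Finset.sum_add_distrib, ← Finset.mul_sum, ← Finset.sum_mul, huu, z]
    ring
  have hR2 : ∑ i, ∑ j, (∑ α, trace (h α) * h α i j) ^ 2 = s ^ 2 * frob a a := by
    simp only [frob, Finset.mul_sum]
    refine Finset.sum_congr rfl fun i _ => Finset.sum_congr rfl fun j _ => ?_
    have : ∑ α, trace (h α) * h α i j = s * a i j := by
      simp only [ha, Matrix.sum_apply, Matrix.smul_apply, smul_eq_mul, Finset.mul_sum, hu, mul_assoc]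
    rw [this]; ring
  have hR1 := reaction_le u huu a a₀ g ha₀sym hgsym hug hf hcm
  simp only [← hsplit] at hR1
  have hcomm : ∀ α β i j, ∑ p, (h α i p * h β j p - h β i p * h α j p)
      = commut (h α) (h β) i j := by
    intro α β i j
    simp [commut, mul_apply, Finset.sum_sub_distrib]
  simp only [hcomm, hR2]
  change ∑ α, ∑ β, frob (h α) (h β) ^ 2 + _ ≤ _
  rw [hA, hsum, ← hs2] at hpinch
  refine hR1.trans ?_
  rw [hfa₀]
  set x := frob a a
  set b := ∑ α, frob (g α) (g α) with hb
  have hb0 : 0 ≤ b := Finset.sum_nonneg fun _ _ => frob_self_nonneg _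
  have hx0 : 0 ≤ x := frob_self_nonneg _
  have hcs : c * s ^ 2 ≤ 4 / 3 * (s ^ 2 / n) := by
    calc c * s ^ 2 ≤ 4 / (3 * (n : ℝ)) * s ^ 2 :=
          mul_le_mul_of_nonneg_right hc (sq_nonneg s)
      _ = 4 / 3 * (s ^ 2 / n) := by field_simp
  set y := s ^ 2 / n
  have k1 : (x + b) * x ≤ c * s ^ 2 * x := mul_le_mul_of_nonneg_right hpinch hx0
  have k2 : b * (3 * x + 3 * b - 4 * y) ≤ 0 :=
    mul_nonpos_of_nonneg_of_nonpos hb0 (by linarith)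
  nlinarith [mul_nonneg hb0 hb0]
end

section
/- Let n ≥ 2, m ≥ 1, and let (h_α)_{α ∈ Fin m} be symmetric real n×n matrices with H_α := tr h_α, |H|² := Σ_α H_α² > 0, |A|² := Σ_α Σ_{i,j} ((h_α)_{ij})². Let a ≥ 0 and 1/n < c ≤ 4/(3n), and set Q := |A|² + a − c|H|². Define A₁ := Σ_α (H_α/|H|)·h_α, |A₋|² := Σ_α ‖h_α − (H_α/|H|)·A₁‖² (which equals |A|² − |A₁|²), Å₁ := A₁ − (|H|/n)·I (the trace-free part of A₁, since tr A₁ = |H|), |Å₁|² its squared Frobenius norm, and |Å₋|² := |A₋|² (the components of h orthogonal to the mean curvature direction are trace free). With R₁ := Σ_{α,β} (Σ_{i,j} (h_α)_{ij}(h_β)_{ij})² + Σ_{i,j,α,β} (Σ_p ((h_α)_{ip}(h_β)_{jp} − (h_β)_{ip}(h_α)_{jp}))² and R₂ := Σ_{i,j} (Σ_α H_α (h_α)_{ij})², if Q ≤ 0 then 2R₁ − 2cR₂ ≤ 2|A₁|²·Q − 2a|A₁|² − (2a/(n(c−1/n)))·|Å₋|² + (2/(n(c−1/n)))·|A₋|²·Q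 + (6 − 2/(n(c−1/n)))·|Å₁|²·|Å₋|² + (3 − 2/(n(c−1/n)))·|Å₋|⁴, and this right-hand side is ≤ 0. -/
/-!
Write `u = H/|H|` and `hα = uα A₁ + kα`. Since `|u| = 1` and `∑ uα kα = 0`, Pythagoras gives
`R₁ = |A₁|⁴ + 2 ∑ (⟨Å₁, kα⟩² + |[Å₁, kα]|²) + ∑ (⟨kα, kβ⟩² + |[kα, kβ]|²)`, where `Å₁` may replace
`A₁` in the mixed terms because the `kα` are trace free, and `R₂ = |H|² |A₁|²`. On the other hand
the claimed upper bound simplifies identically to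
`2|A₁|⁴ - 2c|H|²|A₁|² + 8|Å₁|²|A₋|² + 3|A₋|⁴`. So two matrix inequalities are needed:

* `⟨X, Y⟩² + |[X, Y]|² ≤ 2|X|²|Y|²` for `X` symmetric (`inner_sq_add_commutator_le`);
* the Li–Li inequality `∑ (⟨kα, kβ⟩² + |[kα, kβ]|²) ≤ 3/2 (∑ |kα|²)²` (`li_li`).

For the second, an orthogonal change of frame makes the `kα` mutually orthogonal. The key estimate
(`sum_commutator_le`) is then `∑ |[A, Bα]|² ≤ |A|² (∑ |Bα|² + max |Bα|²)` for an orthogonal family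
`Bα`: for `A = diag d` the left side is `∑ (dᵢ - dⱼ)² (Bα)ᵢⱼ²`, the excesses of the weights over
`|d|²` satisfy `∑_{i<j} ((dᵢ - dⱼ)² - |d|²)₊ ≤ |d|²` (`spread_bound`), and Bessel's inequality
bounds `2 ∑ (Bα)ᵢⱼ²` by the largest `|Bα|²`. Applying this with `A` the largest member and the
rest as `Bα`, and iterating over the squared norms `x₁ ≥ x₂ ≥ …`, leaves the scalar inequality
`∑ xᵢ xᵢ₊₁ ≤ (x₁ + x₃ + …)(x₂ + x₄ + …) ≤ (∑ xᵢ)²/4`.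

The upper bound is nonpositive because `nc - 1 ≤ 1/3` makes every one of its terms nonpositive.
-/

open Finset Matrix

/-- The Frobenius inner product `⟨X, Y⟩ = ∑ Xᵢⱼ Yᵢⱼ`. -/
def frob {ι : Type*} [Fintype ι] (X Y : Matrix ι ι ℝ) : ℝ := ∑ i, ∑ j, X i j * Y i j

/-! ### The Frobenius inner product and diagonalization -/

section Frobenius

variable {ι κ : Type*} [Fintype ι]

lemma frob_eq_trace (X Y : Matrix ι ι ℝ) : frob X Y = trace (Xᵀ * Y) := by
  simp only [frob, trace, Matrix.diag, mul_apply, transpose_apply]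
  exact sum_comm

lemma frob_comm (X Y : Matrix ι ι ℝ) : frob X Y = frob Y X := by
  simp only [frob, mul_comm]

lemma frob_self_nonneg (X : Matrix ι ι ℝ) : 0 ≤ frob X X :=
  sum_nonneg fun _ _ => sum_nonneg fun _ _ => mul_self_nonneg _

lemma frob_smul_left (r : ℝ) (X Y : Matrix ι ι ℝ) : frob (r • X) Y = r * frob X Y := by
  simp [frob, mul_sum, mul_assoc]

lemma frob_add_left (X Y Z : Matrix ι ι ℝ) : frob (X + Y) Z = frob X Z + frob Y Z := by
  simp [frob, add_mul, sum_add_distrib]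

lemma frob_sum_left (s : Finset κ) (f : κ → Matrix ι ι ℝ) (Y : Matrix ι ι ℝ) :
    frob (∑ a ∈ s, f a) Y = ∑ a ∈ s, frob (f a) Y := by
  classical
  induction s using Finset.induction_on with
  | empty => simp [frob]
  | insert a s ha ih => rw [sum_insert ha, sum_insert ha, frob_add_left, ih]

lemma frob_smul_right (r : ℝ) (X Y : Matrix ι ι ℝ) : frob X (r • Y) = r * frob X Y := by
  rw [frob_comm, frob_smul_left, frob_comm]

lemma frob_sum_right (s : Finset κ) (f : κ → Matrix ι ι ℝ) (Y : Matrix ι ι ℝ) :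
    frob Y (∑ a ∈ s, f a) = ∑ a ∈ s, frob Y (f a) := by
  simp only [frob_comm Y, frob_sum_left]

lemma conj_symm (U B : Matrix ι ι ℝ) (hB : B.IsSymm) : (Uᵀ * B * U).IsSymm := by
  rw [Matrix.IsSymm, transpose_mul, transpose_mul, transpose_transpose, hB.eq, Matrix.mul_assoc]

variable [DecidableEq ι]

lemma frob_conj (U X Y : Matrix ι ι ℝ) (hU : U * Uᵀ = 1) :
    frob (Uᵀ * X * U) (Uᵀ * Y * U) = frob X Y := by
  rw [frob_eq_trace, frob_eq_trace]
  have : (Uᵀ * X * U)ᵀ * (Uᵀ * Y * U) = Uᵀ * (Xᵀ * Y * U) := by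
    simp only [transpose_mul, transpose_transpose]
    calc Uᵀ * (Xᵀ * U) * (Uᵀ * Y * U) = Uᵀ * Xᵀ * (U * Uᵀ) * Y * U := by
          simp only [Matrix.mul_assoc]
      _ = _ := by rw [hU]; simp only [Matrix.mul_assoc, Matrix.one_mul]
  rw [this, trace_mul_comm, Matrix.mul_assoc, hU, Matrix.mul_one]

lemma exists_diagonalization (A : Matrix ι ι ℝ) (hA : A.IsSymm) :
    ∃ (U : Matrix ι ι ℝ) (d : ι → ℝ), Uᵀ * U = 1 ∧ U * Uᵀ = 1 ∧ Uᵀ * A * U = diagonal d := by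
  have hH : A.IsHermitian := by
    rw [Matrix.IsHermitian, conjTranspose_eq_transpose_of_trivial]; exact hA
  have h1 : (hH.eigenvectorUnitary : Matrix ι ι ℝ)ᵀ * hH.eigenvectorUnitary = 1 := by
    have := Unitary.coe_star_mul_self hH.eigenvectorUnitary
    rwa [star_eq_conjTranspose, conjTranspose_eq_transpose_of_trivial] at this
  have h2 : (hH.eigenvectorUnitary : Matrix ι ι ℝ) * (hH.eigenvectorUnitary : Matrix ι ι ℝ)ᵀ = 1 := by
    have := Unitary.coe_mul_star_self hH.eigenvectorUnitary
    rwa [Unitary.coe_star, star_eq_conjTranspose, conjTranspose_eq_transpose_of_trivial] at this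
  refine ⟨hH.eigenvectorUnitary, hH.eigenvalues, h1, h2, ?_⟩
  have h3 := hH.spectral_theorem
  rw [Unitary.conjStarAlgAut_apply, star_eq_conjTranspose,
    conjTranspose_eq_transpose_of_trivial] at h3
  generalize (hH.eigenvectorUnitary : Matrix ι ι ℝ) = U at *
  generalize hH.eigenvalues = d at *
  have hd : (RCLike.ofReal ∘ d : ι → ℝ) = d := by ext; simp
  rw [hd] at h3
  rw [h3]
  calc Uᵀ * (U * diagonal d * Uᵀ) * U = (Uᵀ * U) * diagonal d * (Uᵀ * U) := by
        simp only [Matrix.mul_assoc]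
    _ = _ := by rw [h1]; simp

lemma conj_commutator (U A B : Matrix ι ι ℝ) (hU : U * Uᵀ = 1) :
    Uᵀ * (A * B - B * A) * U
      = (Uᵀ * A * U) * (Uᵀ * B * U) - (Uᵀ * B * U) * (Uᵀ * A * U) := by
  have key : ∀ X Y : Matrix ι ι ℝ, (Uᵀ * X * U) * (Uᵀ * Y * U) = Uᵀ * (X * Y) * U := by
    intro X Y
    calc (Uᵀ * X * U) * (Uᵀ * Y * U) = Uᵀ * X * (U * Uᵀ) * Y * U := by
          simp only [Matrix.mul_assoc]
      _ = _ := by rw [hU]; simp only [Matrix.mul_assoc, Matrix.one_mul]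
  rw [key, key, Matrix.mul_sub, Matrix.sub_mul]

lemma frob_commutator_diagonal (d : ι → ℝ) (B : Matrix ι ι ℝ) :
    frob (diagonal d * B - B * diagonal d) (diagonal d * B - B * diagonal d)
      = ∑ i, ∑ j, (d i - d j) ^ 2 * B i j ^ 2 := by
  simp only [frob, Matrix.sub_apply, diagonal_mul, mul_diagonal]
  exact sum_congr rfl fun i _ => sum_congr rfl fun j _ => by ring

lemma frob_diagonal (d : ι → ℝ) : frob (diagonal d) (diagonal d) = ∑ i, d i ^ 2 := by
  simp [frob, diagonal_apply, sq]

/-- After diagonalizing `X`, the diagonal of `Y` is controlled by Cauchy–Schwarz and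
the off-diagonal part by `(dᵢ - dⱼ)² ≤ 2 (dᵢ² + dⱼ²) ≤ 2 |X|²`. -/
lemma inner_sq_add_commutator_le (X Y : Matrix ι ι ℝ) (hX : X.IsSymm) :
    frob X Y ^ 2 + frob (X * Y - Y * X) (X * Y - Y * X) ≤ 2 * (frob X X * frob Y Y) := by
  obtain ⟨U, d, -, hU2, hd⟩ := exists_diagonalization X hX
  rw [← frob_conj U X Y hU2, ← frob_conj U X X hU2, ← frob_conj U Y Y hU2,
    ← frob_conj U (X * Y - Y * X) _ hU2, conj_commutator U X Y hU2, hd]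
  generalize Uᵀ * Y * U = B
  rw [frob_commutator_diagonal, frob_diagonal]
  have h1 : frob (diagonal d) B = ∑ i, d i * B i i := by
    simp [frob, diagonal_apply]
  have h2 : (∑ i, d i * B i i) ^ 2 ≤ (∑ i, d i ^ 2) * ∑ i, B i i ^ 2 :=
    sum_mul_sq_le_sq_mul_sq _ _ _
  set L := ∑ i, d i ^ 2 with hL
  have hL0 : 0 ≤ L := sum_nonneg fun _ _ => sq_nonneg _
  have h3 : ∀ i, ∑ j, (d i - d j) ^ 2 * B i j ^ 2
      ≤ 2 * L * (∑ j, B i j ^ 2) - 2 * L * B i i ^ 2 := by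
    intro i
    rw [← add_sum_erase univ (fun j => B i j ^ 2) (mem_univ i),
      ← add_sum_erase univ _ (mem_univ i), mul_add, add_sub_cancel_left, mul_sum]
    simp only [sub_self, ne_eq, OfNat.ofNat_ne_zero, not_false_eq_true, zero_pow, zero_mul,
      zero_add]
    refine sum_le_sum fun j hj => mul_le_mul_of_nonneg_right ?_ (sq_nonneg _)
    have : d i ^ 2 + d j ^ 2 ≤ L := by
      rw [hL, ← sum_pair (f := fun k => d k ^ 2) (ne_of_mem_erase hj).symm]
      exact sum_le_sum_of_subset_of_nonneg (subset_univ _) fun _ _ _ => sq_nonneg _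
    nlinarith [sq_nonneg (d i + d j)]
  have h4 := sum_le_sum fun i (_ : i ∈ univ) => h3 i
  rw [sum_sub_distrib, ← mul_sum, ← mul_sum] at h4
  have h5 : frob B B = ∑ i, ∑ j, B i j ^ 2 := by simp only [frob, sq]
  have h6 : 0 ≤ ∑ i, B i i ^ 2 := sum_nonneg fun _ _ => sq_nonneg _
  rw [h1, h5]
  nlinarith [mul_nonneg hL0 h6]

end Frobenius

/-! ### Squared differences of the entries of a vector -/

section Spread

variable {ι : Type*} [Fintype ι] [DecidableEq ι]

/-- Laplacian bound for a star with centre `i₀` and leaves `J`. -/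
lemma star_bound (d : ι → ℝ) (i₀ : ι) (J : Finset ι) (hi : i₀ ∉ J) :
    ∑ j ∈ J, ((d i₀ - d j) ^ 2 - ∑ k, d k ^ 2) ≤ ∑ k, d k ^ 2 := by
  set L := ∑ k, d k ^ 2 with hL
  have h1 : d i₀ ^ 2 + ∑ j ∈ J, d j ^ 2 ≤ L := by
    rw [← sum_insert (f := fun k => d k ^ 2) hi]
    exact sum_le_sum_of_subset_of_nonneg (subset_univ _) fun _ _ _ => sq_nonneg _
  have h2 : (∑ j ∈ J, d j) ^ 2 ≤ #J * ∑ j ∈ J, d j ^ 2 := sq_sum_le_card_mul_sum_sq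
  have h3 : ∑ j ∈ J, ((d i₀ - d j) ^ 2 - L)
      = #J * d i₀ ^ 2 - 2 * d i₀ * (∑ j ∈ J, d j) + ∑ j ∈ J, d j ^ 2 - #J * L := by
    rw [mul_sum, ← nsmul_eq_mul, ← nsmul_eq_mul, ← sum_const, ← sum_const, ← sum_sub_distrib,
      ← sum_add_distrib, ← sum_sub_distrib]
    exact sum_congr rfl fun j _ => by ring
  rw [h3]
  have hc : (0 : ℝ) ≤ #J := Nat.cast_nonneg _
  nlinarith [mul_le_mul_of_nonneg_left h1 hc, sq_nonneg (d i₀ + ∑ j ∈ J, d j)]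

/-- Only pairs with `(dᵢ - dⱼ)² > ∑ d²` contribute. Such a pair has `dᵢ`, `dⱼ` of opposite sign,
and two such pairs always share an index, so they form a star. -/
lemma spread_bound (d : ι → ℝ) :
    ∑ p : ι × ι with d p.2 < d p.1 ∧ ∑ k, d k ^ 2 < (d p.1 - d p.2) ^ 2,
      ((d p.1 - d p.2) ^ 2 - ∑ k, d k ^ 2) ≤ ∑ k, d k ^ 2 := by
  set L := ∑ k, d k ^ 2 with hL
  set E : Finset (ι × ι) :=
    univ.filter fun p => d p.2 < d p.1 ∧ L < (d p.1 - d p.2) ^ 2 with hE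
  have hmem : ∀ p ∈ E, d p.2 < 0 ∧ 0 < d p.1 ∧ L < (d p.1 - d p.2) ^ 2 := by
    intro p hp
    obtain ⟨h1, h2⟩ := (mem_filter.1 hp).2
    have hne : p.1 ≠ p.2 := fun h => by rw [h] at h1; exact lt_irrefl _ h1
    have h3 : d p.1 ^ 2 + d p.2 ^ 2 ≤ L := by
      rw [hL, ← sum_pair (f := fun k => d k ^ 2) hne]
      exact sum_le_sum_of_subset_of_nonneg (subset_univ _) fun _ _ _ => sq_nonneg _
    have h4 : d p.1 * d p.2 < 0 := by nlinarith
    rcases mul_neg_iff.1 h4 with h | h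
    · exact ⟨h.2, h.1, h2⟩
    · linarith
  have hshare : ∀ p ∈ E, ∀ q ∈ E, p.1 = q.1 ∨ p.2 = q.2 := by
    intro p hp q hq
    by_contra! hcon
    obtain ⟨p2, p1, pL⟩ := hmem p hp
    obtain ⟨q2, q1, qL⟩ := hmem q hq
    have e1 : p.1 ≠ p.2 := fun h => by rw [h] at p1; linarith
    have e2 : q.1 ≠ q.2 := fun h => by rw [h] at q1; linarith
    have e3 : p.1 ≠ q.2 := fun h => by rw [h] at p1; linarith
    have e4 : q.1 ≠ p.2 := fun h => by rw [h] at q1; linarith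
    have h4 : d p.1 ^ 2 + (d q.1 ^ 2 + (d p.2 ^ 2 + d q.2 ^ 2)) ≤ L := by
      rw [hL, ← sum_pair (f := fun k => d k ^ 2) hcon.2,
        ← sum_insert (f := fun k => d k ^ 2) (by simp [e2, e4]),
        ← sum_insert (f := fun k => d k ^ 2) (by simp [e1, e3, hcon.1])]
      exact sum_le_sum_of_subset_of_nonneg (subset_univ _) fun _ _ _ => sq_nonneg _
    nlinarith [sq_nonneg (d p.1 + d p.2), sq_nonneg (d q.1 + d q.2)]
  have hstar : E = ∅ ∨ (∃ i, ∀ p ∈ E, p.1 = i) ∨ (∃ j, ∀ p ∈ E, p.2 = j) := by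
    rcases E.eq_empty_or_nonempty with h | ⟨p, hp⟩
    · exact Or.inl h
    · right
      by_contra! hcon
      obtain ⟨q, hq, hq1⟩ := hcon.1 p.1
      obtain ⟨r, hr, hr1⟩ := hcon.2 p.2
      have := hshare p hp q hq
      have := hshare p hp r hr
      have := hshare q hq r hr
      grind
  rcases hstar with h | ⟨i, hi⟩ | ⟨j, hj⟩
  · rw [h, sum_empty]; exact sum_nonneg fun _ _ => sq_nonneg _
  · have hinj : Set.InjOn Prod.snd (E : Set (ι × ι)) := fun p hp q hq hpq =>
      Prod.ext ((hi p hp).trans (hi q hq).symm) hpq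
    have := star_bound d i (E.image Prod.snd) (by
      intro hmm
      obtain ⟨p, hp, hpi⟩ := mem_image.1 hmm
      have := hmem p hp
      rw [hpi, hi p hp] at this
      linarith)
    rw [sum_image hinj] at this
    refine le_trans (le_of_eq (sum_congr rfl fun p hp => ?_)) this
    rw [hi p hp]
  · have hinj : Set.InjOn Prod.fst (E : Set (ι × ι)) := fun p hp q hq hpq =>
      Prod.ext hpq ((hj p hp).trans (hj q hq).symm)
    have := star_bound d j (E.image Prod.fst) (by
      intro hmm
      obtain ⟨p, hp, hpi⟩ := mem_image.1 hmm
      have := hmem p hp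
      rw [hpi, hj p hp] at this
      linarith)
    rw [sum_image hinj] at this
    refine le_trans (le_of_eq (sum_congr rfl fun p hp => ?_)) this
    rw [hj p hp]; ring

lemma spread_bound_symm (d : ι → ℝ) :
    ∑ i, ∑ j, max ((d i - d j) ^ 2 - ∑ k, d k ^ 2) 0 ≤ 2 * ∑ k, d k ^ 2 := by
  have key := spread_bound d
  set L := ∑ k, d k ^ 2 with hL
  have hL0 : 0 ≤ L := sum_nonneg fun _ _ => sq_nonneg _
  rw [sum_filter, Fintype.sum_prod_type] at key
  have key2 := key
  rw [sum_comm] at key2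
  rw [two_mul]
  refine le_trans ?_ (add_le_add key key2)
  rw [← sum_add_distrib]
  refine sum_le_sum fun i _ => ?_
  rw [← sum_add_distrib]
  refine sum_le_sum fun j _ => ?_
  have hs : (d j - d i) ^ 2 = (d i - d j) ^ 2 := by ring
  simp only [hs]
  rcases le_or_gt ((d i - d j) ^ 2) L with h | h
  · rw [max_eq_right (by linarith)]
    simp [h.not_gt]
  · rw [max_eq_left (by linarith)]
    rcases lt_trichotomy (d i) (d j) with h' | h' | h'
    · simp [h, h', h'.not_gt]
    · rw [h'] at h; simp at h; linarith
    · simp [h, h', h'.not_gt]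

end Spread

/-! ### Commutators with an orthogonal family -/

section Commutators

variable {ι κ : Type*} [Fintype ι] [DecidableEq ι]

/-- Bessel's inequality against the unit matrix `(Eᵢⱼ + Eⱼᵢ)/√2`. -/
lemma entry_bessel (s : Finset κ) (B : κ → Matrix ι ι ℝ) (hB : ∀ α, (B α).IsSymm)
    (horth : ∀ α β, α ≠ β → frob (B α) (B β) = 0)
    (x : ℝ) (hx0 : 0 ≤ x) (hx : ∀ α ∈ s, frob (B α) (B α) ≤ x) (i j : ι) (hij : i ≠ j) :
    2 * ∑ α ∈ s, B α i j ^ 2 ≤ x := by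
  set S := ∑ α ∈ s, B α i j ^ 2 with hS
  have hS0 : 0 ≤ S := sum_nonneg fun _ _ => sq_nonneg _
  set v : Matrix ι ι ℝ := ∑ α ∈ s, B α i j • B α with hv
  have hvij : v i j = S := by
    simp [hv, Matrix.sum_apply, hS, sq]
  have hvji : v j i = S := by
    simp only [hv, Matrix.sum_apply, hS, sq, Matrix.smul_apply, smul_eq_mul]
    exact sum_congr rfl fun α _ => by rw [(hB α).apply i j]
  have h1 : frob v v ≤ x * S := by
    have : frob v v = ∑ α ∈ s, B α i j ^ 2 * frob (B α) (B α) := by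
      conv_lhs => rw [hv]
      rw [frob_sum_left]
      refine sum_congr rfl fun α hα => ?_
      rw [frob_sum_right, sum_eq_single_of_mem α hα]
      · rw [frob_smul_left, frob_smul_right]; ring
      · intro β _ hβ
        rw [frob_smul_left, frob_smul_right, horth _ _ hβ.symm]; ring
    rw [this, hS, mul_sum]
    refine sum_le_sum fun α hα => ?_
    nlinarith [hx α hα, sq_nonneg (B α i j)]
  have h2 : 2 * S ^ 2 ≤ frob v v := by
    have e : frob v v = ∑ p : ι × ι, v p.1 p.2 * v p.1 p.2 := by
      rw [Fintype.sum_prod_type]; rfl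
    have hne : (i, j) ≠ (j, i) := fun h => hij (Prod.ext_iff.1 h).1
    have : ∑ p ∈ {(i, j), (j, i)}, v p.1 p.2 * v p.1 p.2 ≤ frob v v := by
      rw [e]
      exact sum_le_sum_of_subset_of_nonneg (subset_univ _) fun _ _ _ => mul_self_nonneg _
    rw [sum_pair hne, hvij, hvji] at this
    linarith
  rcases hS0.eq_or_lt with h | h
  · rw [← h]; simpa using hx0
  · have : S * (2 * S) ≤ S * x := by nlinarith
    exact le_of_mul_le_mul_left this h

/-- One symmetric matrix against an orthogonal family: the commutators exceed
`|A|² ∑ |Bα|²` by at most one extra copy of the largest norm. -/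
lemma sum_commutator_le (A : Matrix ι ι ℝ) (hA : A.IsSymm) (s : Finset κ)
    (B : κ → Matrix ι ι ℝ) (hB : ∀ α, (B α).IsSymm)
    (horth : ∀ α β, α ≠ β → frob (B α) (B β) = 0)
    (x : ℝ) (hx0 : 0 ≤ x) (hx : ∀ α ∈ s, frob (B α) (B α) ≤ x) :
    ∑ α ∈ s, frob (A * B α - B α * A) (A * B α - B α * A)
      ≤ frob A A * (∑ α ∈ s, frob (B α) (B α) + x) := by
  obtain ⟨U, d, -, hU2, hd⟩ := exists_diagonalization A hA
  have e1 : ∀ α, frob (A * B α - B α * A) (A * B α - B α * A)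
      = ∑ i, ∑ j, (d i - d j) ^ 2 * (Uᵀ * B α * U) i j ^ 2 := fun α => by
    rw [← frob_conj U _ _ hU2, conj_commutator U A _ hU2, hd, frob_commutator_diagonal]
  have hC : ∀ α, (Uᵀ * B α * U).IsSymm := fun α => conj_symm U _ (hB α)
  simp only [e1]
  simp only [← frob_conj U (B _) (B _) hU2] at horth hx ⊢
  rw [← frob_conj U A A hU2, hd, frob_diagonal]
  generalize hCd : (fun α => Uᵀ * B α * U) = C
  have hCa : ∀ α, Uᵀ * B α * U = C α := fun α => congrFun hCd α
  simp only [hCa] at *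
  have hspread := spread_bound_symm d
  set L := ∑ i, d i ^ 2 with hL
  have hbess := entry_bessel s C hC horth x hx0 hx
  have h1 : ∀ α, ∑ i, ∑ j, (d i - d j) ^ 2 * C α i j ^ 2
      ≤ L * frob (C α) (C α) + ∑ i, ∑ j, max ((d i - d j) ^ 2 - L) 0 * C α i j ^ 2 := by
    intro α
    rw [frob, mul_sum, ← sum_add_distrib]
    refine sum_le_sum fun i _ => ?_
    rw [mul_sum, ← sum_add_distrib]
    refine sum_le_sum fun j _ => ?_
    nlinarith [le_max_left ((d i - d j) ^ 2 - L) 0, sq_nonneg (C α i j)]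
  have h2 : ∑ α ∈ s, ∑ i, ∑ j, max ((d i - d j) ^ 2 - L) 0 * C α i j ^ 2
      ≤ ∑ i, ∑ j, max ((d i - d j) ^ 2 - L) 0 * (x / 2) := by
    rw [sum_comm]
    refine sum_le_sum fun i _ => ?_
    rw [sum_comm]
    refine sum_le_sum fun j _ => ?_
    rw [← mul_sum]
    by_cases hij : i = j
    · have : 0 ≤ L := sum_nonneg fun _ _ => sq_nonneg _
      simp [hij, this]
    · exact mul_le_mul_of_nonneg_left (by linarith [hbess i j hij]) (le_max_right _ _)
  have h3 : ∑ i, ∑ j, max ((d i - d j) ^ 2 - L) 0 * (x / 2) ≤ L * x := by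
    simp only [← sum_mul]
    nlinarith
  have h4 := sum_le_sum fun α (_ : α ∈ s) => h1 α
  rw [sum_add_distrib, ← mul_sum] at h4
  linarith

/-- Here `P` and `R` are the sums of every other squared norm, in decreasing order and starting
from the largest, respectively second largest, one. Adding a new largest member
to the family swaps their roles. -/
lemma orthogonal_family_aux [DecidableEq κ] (B : κ → Matrix ι ι ℝ) (hB : ∀ α, (B α).IsSymm)
    (horth : ∀ α β, α ≠ β → frob (B α) (B β) = 0) (s : Finset κ) :
    ∃ P R : ℝ, 0 ≤ P ∧ 0 ≤ R ∧ P + R = ∑ α ∈ s, frob (B α) (B α) ∧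
      (∀ β ∈ s, frob (B β) (B β) ≤ P) ∧
      ∑ α ∈ s, frob (B α) (B α) ^ 2
        + ∑ α ∈ s, ∑ β ∈ s, frob (B α * B β - B β * B α) (B α * B β - B β * B α)
        ≤ (∑ α ∈ s, frob (B α) (B α)) ^ 2 + 2 * (P * R) := by
  induction s using Finset.induction_on_max_value (fun α => frob (B α) (B α)) with
  | empty => exact ⟨0, 0, by simp⟩
  | insert a s ha hmax ih =>
    obtain ⟨P, R, hP, hR, hsum, hle, hmain⟩ := ih
    have hx0 := frob_self_nonneg (B a)
    refine ⟨frob (B a) (B a) + R, P, by positivity, hP, ?_, ?_, ?_⟩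
    · rw [sum_insert ha, ← hsum]; ring
    · intro β hβ
      rcases mem_insert.1 hβ with rfl | hβ
      · linarith
      · linarith [hmax β hβ]
    · have hlu := sum_commutator_le (B a) (hB a) s B hB horth P hP hle
      have hanti : ∀ α, frob (B α * B a - B a * B α) (B α * B a - B a * B α)
          = frob (B a * B α - B α * B a) (B a * B α - B α * B a) := by
        intro α
        simp only [frob, Matrix.sub_apply]
        exact sum_congr rfl fun i _ => sum_congr rfl fun j _ => by ring
      have hz : frob (B a * B a - B a * B a) (B a * B a - B a * B a) = 0 := by
        simp [frob]
      simp only [sum_insert ha, sum_add_distrib, hanti, hz]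
      nlinarith

lemma orthogonal_family [Fintype κ] [DecidableEq κ] (B : κ → Matrix ι ι ℝ) (hB : ∀ α, (B α).IsSymm)
    (horth : ∀ α β, α ≠ β → frob (B α) (B β) = 0) :
    ∑ α, ∑ β, frob (B α) (B β) ^ 2
        + ∑ α, ∑ β, frob (B α * B β - B β * B α) (B α * B β - B β * B α)
        ≤ 3 / 2 * (∑ α, frob (B α) (B α)) ^ 2 := by
  obtain ⟨P, R, hP, hR, hsum, -, hmain⟩ := orthogonal_family_aux B hB horth univ
  have : ∀ α, ∑ β, frob (B α) (B β) ^ 2 = frob (B α) (B α) ^ 2 := fun α =>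
    sum_eq_single_of_mem α (mem_univ _) fun β _ h => by rw [horth _ _ h.symm]; simp
  simp only [this]
  rw [← hsum] at hmain ⊢
  nlinarith [sq_nonneg (P - R)]

end Commutators

/-! ### Change of frame and the reaction term -/

section Frame

variable {ι κ : Type*} [Fintype ι] [DecidableEq ι] [Fintype κ]

/-- The Li–Li inequality. Both sums on the left are invariant under an orthogonal change of the
index frame, and a frame diagonalizing the Gram matrix makes the family orthogonal. -/
lemma li_li [DecidableEq κ] (k : κ → Matrix ι ι ℝ) (hk : ∀ α, (k α).IsSymm) :
    ∑ α, ∑ β, frob (k α) (k β) ^ 2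
        + ∑ α, ∑ β, frob (k α * k β - k β * k α) (k α * k β - k β * k α)
        ≤ 3 / 2 * (∑ α, frob (k α) (k α)) ^ 2 := by
  set G : Matrix κ κ ℝ := Matrix.of fun α β => frob (k α) (k β) with hG
  have hGs : G.IsSymm := by ext α β; simp [hG, frob_comm (k α)]
  obtain ⟨U, d, hU1, hU2, hd⟩ := exists_diagonalization G hGs
  set b : κ → Matrix ι ι ℝ := fun γ => ∑ α, U α γ • k α with hb
  have hbs : ∀ γ, (b γ).IsSymm := by
    intro γ
    simp only [hb, Matrix.IsSymm, transpose_sum, transpose_smul, (hk _).eq]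
  have hgram : ∀ γ δ, frob (b γ) (b δ) = (Uᵀ * G * U) γ δ := by
    intro γ δ
    simp only [hb, frob_sum_left, frob_sum_right, frob_smul_left, frob_smul_right, mul_apply,
      transpose_apply, hG, of_apply, sum_mul, mul_sum]
    exact sum_congr rfl fun α _ => sum_congr rfl fun β _ => by ring
  have horth : ∀ γ δ, γ ≠ δ → frob (b γ) (b δ) = 0 := fun γ δ h => by
    rw [hgram, hd, diagonal_apply_ne _ h]
  have hmain := orthogonal_family b hbs horth
  have h1 : ∑ γ, ∑ δ, frob (b γ) (b δ) ^ 2 = ∑ α, ∑ β, frob (k α) (k β) ^ 2 := by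
    have := frob_conj U G G hU2
    change ∑ γ, ∑ δ, _ * _ = ∑ α, ∑ β, _ * _ at this
    simp only [← hgram, ← sq] at this
    exact this
  have h2 : ∑ γ, frob (b γ) (b γ) = ∑ α, frob (k α) (k α) := by
    have h : trace (Uᵀ * G * U) = trace G := by
      rw [trace_mul_comm, ← Matrix.mul_assoc, hU2, Matrix.one_mul]
    simp only [trace, Matrix.diag, ← hgram] at h
    exact h
  have hent : ∀ (x : κ → Matrix ι ι ℝ), ∑ α, ∑ β, frob (x α * x β - x β * x α)
      (x α * x β - x β * x α) = ∑ i, ∑ j, ∑ α, ∑ β, (x α * x β - x β * x α) i j ^ 2 := by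
    intro x
    simp only [frob, ← sq]
    rw [sum_congr rfl fun α _ => sum_comm, sum_comm]
    refine sum_congr rfl fun i _ => ?_
    rw [sum_congr rfl fun α _ => sum_comm, sum_comm]
  have h3 : ∑ γ, ∑ δ, frob (b γ * b δ - b δ * b γ) (b γ * b δ - b δ * b γ)
      = ∑ α, ∑ β, frob (k α * k β - k β * k α) (k α * k β - k β * k α) := by
    rw [hent, hent]
    refine sum_congr rfl fun i _ => sum_congr rfl fun j _ => ?_
    set M : Matrix κ κ ℝ := Matrix.of fun α β => (k α * k β - k β * k α) i j with hM
    have hbm : ∀ γ δ, (b γ * b δ - b δ * b γ) i j = (Uᵀ * M * U) γ δ := by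
      intro γ δ
      have e : b γ * b δ - b δ * b γ
          = ∑ β, ∑ α, (U α γ * U β δ) • (k α * k β - k β * k α) := by
        simp only [hb, Matrix.sum_mul, Matrix.mul_sum, smul_mul_assoc, mul_smul_comm, smul_sum,
          smul_smul, smul_sub, sum_sub_distrib]
        congr 1
        · exact sum_congr rfl fun α _ => sum_congr rfl fun β _ => by rw [mul_comm (U α δ)]
        · exact sum_comm
      rw [e]
      simp only [Matrix.sum_apply, mul_apply, transpose_apply,
        hM, of_apply, sum_mul, Matrix.smul_apply, smul_eq_mul]
      exact sum_congr rfl fun α _ => sum_congr rfl fun β _ => by ring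
    have := frob_conj U M M hU2
    change ∑ γ, ∑ δ, _ * _ = ∑ α, ∑ β, _ * _ at this
    simp only [← hbm, ← sq] at this
    exact this
  rwa [h1, h2, h3] at hmain

lemma sum_sq_split (u w : κ → ℝ) (y : ℝ) (hu : ∑ β, u β ^ 2 = 1) (hw : ∑ β, u β * w β = 0) :
    ∑ β, (u β * y + w β) ^ 2 = y ^ 2 + ∑ β, w β ^ 2 := by
  have : ∑ β, (u β * y + w β) ^ 2
      = y ^ 2 * ∑ β, u β ^ 2 + 2 * y * ∑ β, u β * w β + ∑ β, w β ^ 2 := by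
    rw [mul_sum, mul_sum, ← sum_add_distrib, ← sum_add_distrib]
    exact sum_congr rfl fun β _ => by ring
  rw [this, hu, hw]; ring

/-- Pythagoras for a bilinear form split along a unit vector `u` and its complement. -/
lemma sum_sum_sq_split (u q r : κ → ℝ) (p : ℝ) (s : κ → κ → ℝ) (hu : ∑ β, u β ^ 2 = 1)
    (hq : ∑ β, u β * q β = 0) (hr : ∑ β, u β * r β = 0)
    (hs1 : ∀ β, ∑ α, u α * s α β = 0) (hs2 : ∀ α, ∑ β, u β * s α β = 0) :
    ∑ α, ∑ β, (u α * u β * p + u α * q β + u β * r α + s α β) ^ 2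
      = p ^ 2 + ∑ β, q β ^ 2 + ∑ β, r β ^ 2 + ∑ α, ∑ β, s α β ^ 2 := by
  have h1 : ∀ α, ∑ β, (u α * u β * p + u α * q β + u β * r α + s α β) ^ 2
      = (u α * p + r α) ^ 2 + ∑ β, (u α * q β + s α β) ^ 2 := by
    intro α
    rw [← sum_sq_split u (fun β => u α * q β + s α β) (u α * p + r α) hu]
    · exact sum_congr rfl fun β _ => by ring
    · have : ∑ β, u β * (u α * q β + s α β) = u α * ∑ β, u β * q β + ∑ β, u β * s α β := by
        rw [mul_sum, ← sum_add_distrib]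
        exact sum_congr rfl fun β _ => by ring
      rw [this, hq, hs2]; ring
  simp only [h1]
  rw [sum_add_distrib, sum_sq_split u r p hu hr, sum_comm]
  simp only [fun β => sum_sq_split u (fun α => s α β) (q β) hu (hs1 β)]
  rw [sum_add_distrib, sum_comm (f := fun β α => s α β ^ 2)]
  ring

/-- Bound for the reaction term of the family `uα A + kα`, with `u` a unit vector and the `kα`
orthogonal to it. The matrix `Z = A - t • 1` replaces `A` in the mixed terms because each `kα` is
trace free and `t • 1` commutes with it. -/
lemma reaction_le [DecidableEq κ] (u : κ → ℝ) (hu : ∑ β, u β ^ 2 = 1) (A Z : Matrix ι ι ℝ) (t : ℝ)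
    (hAZ : A = Z + t • (1 : Matrix ι ι ℝ)) (hZ : Z.IsSymm)
    (k : κ → Matrix ι ι ℝ) (hk : ∀ α, (k α).IsSymm) (hktr : ∀ α, trace (k α) = 0)
    (huk : ∑ α, u α • k α = 0) :
    ∑ α, ∑ β, frob (u α • A + k α) (u β • A + k β) ^ 2
      + ∑ i, ∑ j, ∑ α, ∑ β, ((u α • A + k α) * (u β • A + k β)
          - (u β • A + k β) * (u α • A + k α)) i j ^ 2
      ≤ frob A A ^ 2 + 4 * (frob Z Z * ∑ α, frob (k α) (k α))
        + 3 / 2 * (∑ α, frob (k α) (k α)) ^ 2 := by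
  have huf : ∀ X, ∑ α, u α * frob (k α) X = 0 := by
    intro X
    have : frob (∑ α, u α • k α) X = 0 := by rw [huk]; simp [frob]
    simpa only [frob_sum_left, frob_smul_left] using this
  have huf' : ∀ X, ∑ α, u α * frob X (k α) = 0 := fun X => by
    simpa only [frob_comm X] using huf X
  have e1 : ∑ α, ∑ β, frob (u α • A + k α) (u β • A + k β) ^ 2
      = frob A A ^ 2 + 2 * ∑ β, frob Z (k β) ^ 2 + ∑ α, ∑ β, frob (k α) (k β) ^ 2 := by
    have hz : ∀ β, frob A (k β) = frob Z (k β) := by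
      intro β
      have h1 : frob (1 : Matrix ι ι ℝ) (k β) = 0 := by
        rw [frob_eq_trace, transpose_one, Matrix.one_mul, hktr]
      rw [hAZ, frob_add_left, frob_smul_left, h1]; ring
    have := sum_sum_sq_split u (fun β => frob A (k β)) (fun β => frob A (k β)) (frob A A)
      (fun α β => frob (k α) (k β)) hu (huf' A) (huf' A) (fun β => huf (k β)) (fun α => huf' (k α))
    have h2 : ∀ α β, frob (u α • A + k α) (u β • A + k β)
        = u α * u β * frob A A + u α * frob A (k β) + u β * frob A (k α) + frob (k α) (k β) := by
      intro α β
      rw [frob_add_left, frob_comm _ (_ + _), frob_comm _ (_ + _), frob_add_left, frob_add_left]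
      simp only [frob_smul_left, frob_smul_right]
      rw [frob_comm (k β) A, frob_comm (k β) (k α)]
      ring
    simp only [h2]
    rw [this]
    simp only [hz]
    ring
  have e2 : ∑ i, ∑ j, ∑ α, ∑ β, ((u α • A + k α) * (u β • A + k β)
          - (u β • A + k β) * (u α • A + k α)) i j ^ 2
      = 2 * ∑ β, frob (Z * k β - k β * Z) (Z * k β - k β * Z)
        + ∑ α, ∑ β, frob (k α * k β - k β * k α) (k α * k β - k β * k α) := by
    have hz : ∀ β, A * k β - k β * A = Z * k β - k β * Z := by
      intro β
      rw [hAZ, Matrix.add_mul, Matrix.mul_add]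
      simp
    have hc : ∀ X : Matrix ι ι ℝ, ∑ α, u α • (X * k α - k α * X) = 0 := by
      intro X
      have : X * (∑ α, u α • k α) - (∑ α, u α • k α) * X = 0 := by rw [huk]; simp
      simpa only [Matrix.sum_mul, Matrix.mul_sum, smul_mul_assoc, mul_smul_comm,
        ← sum_sub_distrib, ← smul_sub] using this
    have hce : ∀ (X : Matrix ι ι ℝ) i j, ∑ α, u α * (X * k α - k α * X) i j = 0 := by
      intro X i j
      have := congrFun (congrFun (hc X) i) j
      simpa only [Matrix.sum_apply, Matrix.smul_apply, smul_eq_mul, Matrix.zero_apply] using this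
    have hij : ∀ i j, ∑ α, ∑ β, ((u α • A + k α) * (u β • A + k β)
          - (u β • A + k β) * (u α • A + k α)) i j ^ 2
        = 2 * ∑ β, (Z * k β - k β * Z) i j ^ 2 + ∑ α, ∑ β, (k α * k β - k β * k α) i j ^ 2 := by
      intro i j
      have := sum_sum_sq_split u (fun β => (Z * k β - k β * Z) i j)
        (fun β => -(Z * k β - k β * Z) i j) 0
        (fun α β => (k α * k β - k β * k α) i j) hu (hce Z i j)
        (by simpa only [mul_neg, sum_neg_distrib, neg_eq_zero] using hce Z i j)
        (fun β => by
          have := hce (k β) i j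
          rw [← neg_eq_zero, ← sum_neg_distrib] at this
          rw [← this]
          exact sum_congr rfl fun α _ => by simp only [Matrix.sub_apply]; ring)
        (fun α => hce (k α) i j)
      have h2 : ∀ α β, ((u α • A + k α) * (u β • A + k β)
          - (u β • A + k β) * (u α • A + k α)) i j
          = u α * u β * 0 + u α * (Z * k β - k β * Z) i j + u β * -(Z * k α - k α * Z) i j
            + (k α * k β - k β * k α) i j := by
        intro α β
        have : (u α • A + k α) * (u β • A + k β) - (u β • A + k β) * (u α • A + k α)
            = u α • (A * k β - k β * A) - u β • (A * k α - k α * A)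
              + (k α * k β - k β * k α) := by
          simp only [Matrix.mul_add, Matrix.add_mul, smul_mul_assoc, mul_smul_comm]
          module
        rw [this, hz, hz]
        simp only [Matrix.add_apply, Matrix.sub_apply, Matrix.smul_apply, smul_eq_mul]
        ring
      simp only [h2]
      rw [this]
      simp only [neg_sq]
      ring
    simp only [hij, sum_add_distrib, ← mul_sum]
    congr 1
    · simp only [frob, ← sq]
      congr 1
      rw [sum_congr rfl fun i _ => sum_comm, sum_comm]
    · simp only [frob, ← sq]
      symm
      rw [sum_congr rfl fun α _ => sum_comm, sum_comm]
      refine sum_congr rfl fun i _ => ?_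
      rw [sum_congr rfl fun α _ => sum_comm, sum_comm]
  have h3 := sum_le_sum fun β (_ : β ∈ univ) => inner_sq_add_commutator_le Z (k β) hZ
  rw [sum_add_distrib, ← mul_sum, ← mul_sum] at h3
  have h4 := li_li k hk
  rw [e1, e2]
  linarith

end Frame


/-- Refined reaction-term estimate for the pinching quantity `Q = |A|² + a - c|H|²`. -/
theorem stmt2 (n m : ℕ) (hn : 2 ≤ n) (hm : 1 ≤ m)
    (h : Fin m → Matrix (Fin n) (Fin n) ℝ) (hsym : ∀ α, (h α).IsSymm)
    (a c : ℝ) (ha : 0 ≤ a) (hc1 : 1 / (n : ℝ) < c) (hc2 : c ≤ 4 / (3 * (n : ℝ)))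
    (normHsq : ℝ) (hnormHsq : normHsq = ∑ α, (Matrix.trace (h α)) ^ 2)
    (hHpos : 0 < normHsq)
    (normH : ℝ) (hnormH : normH = Real.sqrt normHsq)
    (Asq : ℝ) (hAsq : Asq = ∑ α, ∑ i, ∑ j, (h α i j) ^ 2)
    (Q : ℝ) (hQdef : Q = Asq + a - c * normHsq)
    (A₁ : Matrix (Fin n) (Fin n) ℝ)
    (hA₁ : A₁ = ∑ α, (Matrix.trace (h α) / normH) • h α)
    (A1sq : ℝ) (hA1sq : A1sq = ∑ i, ∑ j, (A₁ i j) ^ 2)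
    (Amsq : ℝ)
    (hAmsq : Amsq = ∑ α, ∑ i, ∑ j, (h α i j - (Matrix.trace (h α) / normH) * A₁ i j) ^ 2)
    (Ao1sq : ℝ)
    (hAo1sq : Ao1sq =
      ∑ i, ∑ j, ((A₁ - (normH / (n : ℝ)) • (1 : Matrix (Fin n) (Fin n) ℝ)) i j) ^ 2)
    (R₁ R₂ : ℝ)
    (hR₁ : R₁ = (∑ α, ∑ β, (∑ i, ∑ j, h α i j * h β i j) ^ 2)
      + ∑ i, ∑ j, ∑ α, ∑ β, (∑ p, (h α i p * h β j p - h β i p * h α j p)) ^ 2)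
    (hR₂ : R₂ = ∑ i, ∑ j, (∑ α, Matrix.trace (h α) * h α i j) ^ 2)
    (hQle : Q ≤ 0) :
    2 * R₁ - 2 * c * R₂ ≤
        2 * A1sq * Q - 2 * a * A1sq - (2 * a / ((n : ℝ) * (c - 1 / (n : ℝ)))) * Amsq
          + (2 / ((n : ℝ) * (c - 1 / (n : ℝ)))) * Amsq * Q
          + (6 - 2 / ((n : ℝ) * (c - 1 / (n : ℝ)))) * Ao1sq * Amsq
          + (3 - 2 / ((n : ℝ) * (c - 1 / (n : ℝ)))) * Amsq ^ 2
      ∧ 2 * A1sq * Q - 2 * a * A1sq - (2 * a / ((n : ℝ) * (c - 1 / (n : ℝ)))) * Amsq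
          + (2 / ((n : ℝ) * (c - 1 / (n : ℝ)))) * Amsq * Q
          + (6 - 2 / ((n : ℝ) * (c - 1 / (n : ℝ)))) * Ao1sq * Amsq
          + (3 - 2 / ((n : ℝ) * (c - 1 / (n : ℝ)))) * Amsq ^ 2 ≤ 0 := by
  have hn0 : (0 : ℝ) < n := by exact_mod_cast (by omega : 0 < n)
  have hnH : 0 < normH := hnormH ▸ Real.sqrt_pos.2 hHpos
  have hsq : normH ^ 2 = normHsq := by rw [hnormH, Real.sq_sqrt hHpos.le]
  set u : Fin m → ℝ := fun α => trace (h α) / normH with hu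
  have hu1 : ∑ α, u α ^ 2 = 1 := by
    simp only [hu, div_pow, ← sum_div]
    rw [← hnormHsq, hsq, div_self hHpos.ne']
  have hutr : ∀ α, trace (h α) = u α * normH := fun α => by
    simp only [hu]; field_simp
  have hA : A₁ = ∑ α, u α • h α := hA₁
  have hAtr : trace A₁ = normH := by
    simp only [hA, trace_sum, trace_smul, smul_eq_mul, hutr]
    have : ∑ α, u α * (u α * normH) = (∑ α, u α ^ 2) * normH := by
      rw [sum_mul]; exact sum_congr rfl fun α _ => by ring
    rw [this, hu1, one_mul]
  have hAs : A₁.IsSymm := by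
    simp only [hA, Matrix.IsSymm, transpose_sum, transpose_smul, (hsym _).eq]
  set k : Fin m → Matrix (Fin n) (Fin n) ℝ := fun α => h α - u α • A₁ with hk
  have hks : ∀ α, (k α).IsSymm := fun α => by
    simp only [hk, Matrix.IsSymm, transpose_sub, transpose_smul, (hsym _).eq, hAs.eq]
  have hktr : ∀ α, trace (k α) = 0 := fun α => by
    simp only [hk, trace_sub, trace_smul, smul_eq_mul, hAtr, hutr, sub_self]
  have huk : ∑ α, u α • k α = 0 := by
    simp only [hk, smul_sub, sum_sub_distrib, ← hA, smul_smul, ← sq, ← sum_smul, hu1, one_smul,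
      sub_self]
  have hhk : ∀ α, u α • A₁ + k α = h α := fun α => by simp only [hk]; abel
  set Z : Matrix (Fin n) (Fin n) ℝ := A₁ - (normH / (n : ℝ)) • 1 with hZ
  have hZs : Z.IsSymm := by
    simp only [hZ, Matrix.IsSymm, transpose_sub, transpose_smul, transpose_one, hAs.eq]
  have hreact := reaction_le u hu1 A₁ Z (normH / n) (by rw [hZ]; abel) hZs k hks hktr huk
  simp only [hhk] at hreact
  have eA1 : frob A₁ A₁ = A1sq := by simp only [hA1sq, frob, sq]
  have eZ : frob Z Z = Ao1sq := by simp only [hAo1sq, frob, sq]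
  have eK : ∑ α, frob (k α) (k α) = Amsq := by
    simp only [hAmsq, frob, sq, hk, hu, Matrix.sub_apply, Matrix.smul_apply, smul_eq_mul]
  have eR1 : R₁ = ∑ α, ∑ β, frob (h α) (h β) ^ 2
      + ∑ i, ∑ j, ∑ α, ∑ β, (h α * h β - h β * h α) i j ^ 2 := by
    rw [hR₁]
    congr 1
    refine sum_congr rfl fun i _ => sum_congr rfl fun j _ => sum_congr rfl fun α _ =>
      sum_congr rfl fun β _ => ?_
    rw [Matrix.sub_apply, mul_apply, mul_apply, ← sum_sub_distrib]
    congr 1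
    exact sum_congr rfl fun p _ => by rw [(hsym β).apply p j, (hsym α).apply p j]
  rw [← eR1, eA1, eZ, eK] at hreact
  have eR2 : R₂ = normHsq * A1sq := by
    rw [hR₂, hA1sq, mul_sum]
    refine sum_congr rfl fun i _ => ?_
    rw [mul_sum]
    refine sum_congr rfl fun j _ => ?_
    rw [← hsq, ← mul_pow, hA, Matrix.sum_apply, mul_sum]
    congr 1
    refine sum_congr rfl fun α _ => ?_
    rw [Matrix.smul_apply, smul_eq_mul, hutr]; ring
  have eAo : Ao1sq = A1sq - normHsq / n := by
    have h1 : A1sq = frob Z Z + 2 * (normH / n) * frob 1 Z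
        + (normH / n) ^ 2 * frob (1 : Matrix (Fin n) (Fin n) ℝ) 1 := by
      have : A₁ = Z + (normH / (n : ℝ)) • 1 := by rw [hZ]; abel
      rw [← eA1, this, frob_add_left, frob_comm Z (_ + _), frob_comm _ (_ + _), frob_add_left,
        frob_add_left]
      simp only [frob_smul_left, frob_smul_right]
      rw [frob_comm Z 1]
      ring
    have h2 : frob (1 : Matrix (Fin n) (Fin n) ℝ) 1 = n := by
      rw [frob_eq_trace]; simp
    have h3 : frob 1 Z = 0 := by
      rw [frob_eq_trace, transpose_one, Matrix.one_mul, hZ, trace_sub, trace_smul, hAtr]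
      simp
      field_simp
      simp
    rw [h1, h2, h3, eZ, ← hsq]
    field_simp
    ring
  have eAsq : Asq = A1sq + Amsq := by
    have h1 : ∀ i j, ∑ α, h α i j ^ 2 = A₁ i j ^ 2 + ∑ α, k α i j ^ 2 := by
      intro i j
      rw [← sum_sq_split u (fun α => k α i j) (A₁ i j) hu1]
      · exact sum_congr rfl fun α _ => by
          rw [← hhk α, Matrix.add_apply, Matrix.smul_apply, smul_eq_mul]
      · have := congrFun (congrFun huk i) j
        simpa only [Matrix.sum_apply, Matrix.smul_apply, smul_eq_mul, Matrix.zero_apply] using this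
    have hswap : ∀ f : Fin m → Matrix (Fin n) (Fin n) ℝ,
        ∑ α, ∑ i, ∑ j, f α i j ^ 2 = ∑ i, ∑ j, ∑ α, f α i j ^ 2 := by
      intro f
      rw [sum_comm]
      exact sum_congr rfl fun i _ => sum_comm
    have h2 : Amsq = ∑ α, ∑ i, ∑ j, k α i j ^ 2 := by
      rw [← eK]; simp only [frob, sq]
    rw [hAsq, h2, hswap, hswap, hA1sq]
    simp only [h1, sum_add_distrib]
  have hA0 : 0 ≤ A1sq := eA1 ▸ frob_self_nonneg _
  have hZ0 : 0 ≤ Ao1sq := eZ ▸ frob_self_nonneg _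
  have hK0 : 0 ≤ Amsq := eK ▸ sum_nonneg fun _ _ => frob_self_nonneg _
  have hN : (n : ℝ) * (c - 1 / n) = n * c - 1 := by field_simp
  have hN0 : 0 < (n : ℝ) * c - 1 := by
    rw [div_lt_iff₀ hn0] at hc1; linarith
  have hN1 : (n : ℝ) * c - 1 ≤ 1 / 3 := by
    rw [le_div_iff₀ (by positivity)] at hc2; linarith
  rw [hN]
  have h6 : 6 ≤ 2 / ((n : ℝ) * c - 1) := by
    rw [le_div_iff₀ hN0]; linarith
  -- `(Q - a)/(nc - 1)` equals `(|Å₁|² + |A₋|²)/(nc - 1) - |H|²/n`, so every term with this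
  -- denominator cancels from the right-hand side.
  have hid : 2 * A1sq * Q - 2 * a * A1sq - (2 * a / ((n : ℝ) * c - 1)) * Amsq
          + (2 / ((n : ℝ) * c - 1)) * Amsq * Q
          + (6 - 2 / ((n : ℝ) * c - 1)) * Ao1sq * Amsq
          + (3 - 2 / ((n : ℝ) * c - 1)) * Amsq ^ 2
      = 2 * A1sq ^ 2 - 2 * c * normHsq * A1sq + 8 * (Ao1sq * Amsq) + 3 * Amsq ^ 2 := by
    rw [hQdef, eAsq, eAo]
    have hN' : (n : ℝ) * c - 1 ≠ 0 := hN0.ne'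
    generalize hNdef : (n : ℝ) * c - 1 = N at hN'
    have hcN : c = (N + 1) / n := by
      rw [eq_div_iff hn0.ne']; linarith
    rw [hcN]
    field_simp
    ring
  refine ⟨?_, ?_⟩
  · rw [hid, eR2]
    linarith
  · have t1 : A1sq * Q ≤ 0 := mul_nonpos_of_nonneg_of_nonpos hA0 hQle
    have t2 : 0 ≤ a * A1sq := mul_nonneg ha hA0
    have t3 : 0 ≤ (2 * a / ((n : ℝ) * c - 1)) * Amsq := by positivity
    have t4 : (2 / ((n : ℝ) * c - 1)) * Amsq * Q ≤ 0 :=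
      mul_nonpos_of_nonneg_of_nonpos (by positivity) hQle
    have t5 : (6 - 2 / ((n : ℝ) * c - 1)) * Ao1sq * Amsq ≤ 0 := by
      rw [mul_assoc]
      exact mul_nonpos_of_nonpos_of_nonneg (by linarith) (by positivity)
    have t6 : (3 - 2 / ((n : ℝ) * c - 1)) * Amsq ^ 2 ≤ 0 :=
      mul_nonpos_of_nonpos_of_nonneg (by linarith) (by positivity)
    linarith
end

section
/- For every Λ > 0 and every δ > 0 there exists B₀ > 0 such that for all B ≥ B₀ the function f(z) = exp(−B/(z−Λ)) satisfies, for every z ∈ (Λ, 4Λ]: f(z) ≤ δ·f''(z), |f'(z)|·(1 + |f'(z)|) ≤ δ·f''(z), and |f''(z)| ≤ δ. -/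
/-!
With `s = 1 / (z - Λ)` and `e = exp (-B s)` one has `f = e`, `f' = B s² e` and
`f'' = (B² s⁴ - 2 B s³) e`. On `(Λ, 4Λ]` the quantity `s` is at least `1 / (3Λ)`, so for large `B`
`B s ≥ 4`, whence `B² s⁴ e / 2 ≤ f'' ≤ B² s⁴ e`. The lower bound gives the first two
estimates once `B s²` and `δ B s²` are bounded below, since `B s² e = (B s)² e / B ≤ 2 / B`; the
upper bound gives the third, since `B² s⁴ e = (B s)⁴ e / B² ≤ 24 / B²`. Both decay bounds are
instances of `xⁿ e⁻ˣ ≤ n!`.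
-/

lemma hasDerivAt_blend (Λ B z : ℝ) (hz : z - Λ ≠ 0) :
    HasDerivAt (fun z => Real.exp (-B / (z - Λ)))
      (B / (z - Λ) ^ 2 * Real.exp (-B / (z - Λ))) z := by
  have h := ((hasDerivAt_const z (-B)).fun_div ((hasDerivAt_id' z).sub_const Λ) hz).exp
  refine h.congr_deriv ?_
  field_simp
  ring

lemma deriv_deriv_blend (Λ B z : ℝ) (hz : Λ < z) :
    deriv (deriv (fun z => Real.exp (-B / (z - Λ)))) z =
      (B ^ 2 / (z - Λ) ^ 4 - 2 * B / (z - Λ) ^ 3) * Real.exp (-B / (z - Λ)) := by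
  have hz0 : z - Λ ≠ 0 := (sub_pos.2 hz).ne'
  have heq : deriv (fun z => Real.exp (-B / (z - Λ))) =ᶠ[nhds z]
      fun z => B / (z - Λ) ^ 2 * Real.exp (-B / (z - Λ)) := by
    filter_upwards [lt_mem_nhds hz] with y hy
    exact (hasDerivAt_blend Λ B y (sub_pos.2 hy).ne').deriv
  rw [heq.deriv_eq]
  have h := ((hasDerivAt_const z B).fun_div
    (((hasDerivAt_id' z).sub_const Λ).fun_pow 2) (pow_ne_zero 2 hz0)).fun_mul
    (hasDerivAt_blend Λ B z hz0)
  rw [h.deriv]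
  field_simp
  ring

lemma pow_mul_exp_neg_le (n : ℕ) (x : ℝ) (hx : 0 ≤ x) :
    x ^ n * Real.exp (-x) ≤ n.factorial := by
  have h := Real.pow_div_factorial_le_exp x hx n
  rw [div_le_iff₀ (by positivity)] at h
  rw [Real.exp_neg, ← div_eq_mul_inv, div_le_iff₀ (Real.exp_pos x)]
  linarith

/-- The three estimates in the variable `s = 1 / (z - Λ)`. -/
lemma blend_bounds (B s δ : ℝ) (hδ : 0 < δ) (hs : 0 < s) (hB : 2 ≤ B) (hBδ : 24 ≤ B * δ)
    (h1 : 4 ≤ B * s) (h2 : 1 ≤ B * s ^ 2) (h3 : 4 ≤ δ * (B * s ^ 2)) :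
    Real.exp (-(B * s)) ≤ δ * ((B ^ 2 * s ^ 4 - 2 * B * s ^ 3) * Real.exp (-(B * s))) ∧
    |B * s ^ 2 * Real.exp (-(B * s))| * (1 + |B * s ^ 2 * Real.exp (-(B * s))|) ≤
      δ * ((B ^ 2 * s ^ 4 - 2 * B * s ^ 3) * Real.exp (-(B * s))) ∧
    |(B ^ 2 * s ^ 4 - 2 * B * s ^ 3) * Real.exp (-(B * s))| ≤ δ := by
  have e2 := pow_mul_exp_neg_le 2 (B * s) (by linarith)
  have e4 := pow_mul_exp_neg_le 4 (B * s) (by linarith)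
  norm_num [Nat.factorial] at e2 e4
  have he := Real.exp_pos (-(B * s))
  set e := Real.exp (-(B * s))
  have hB0 : 0 < B := by linarith
  have hlow : (B * s ^ 2) ^ 2 / 2 ≤ B ^ 2 * s ^ 4 - 2 * B * s ^ 3 := by
    have : 0 ≤ B * s ^ 3 * (B * s - 4) := mul_nonneg (by positivity) (by linarith)
    nlinarith
  have hup : B ^ 2 * s ^ 4 - 2 * B * s ^ 3 ≤ B ^ 2 * s ^ 4 := by
    have : 0 < B * s ^ 3 := by positivity
    linarith
  have hlow' : δ * ((B * s ^ 2) ^ 2 / 2 * e) ≤ δ * ((B ^ 2 * s ^ 4 - 2 * B * s ^ 3) * e) := by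
    gcongr
  have hf1 : B * s ^ 2 * e ≤ 1 := by
    have : B * (B * s ^ 2 * e) ≤ 2 := by
      linarith [show B * (B * s ^ 2 * e) = (B * s) ^ 2 * e by ring]
    by_contra! hc
    nlinarith
  refine ⟨le_trans ?_ hlow', le_trans ?_ hlow', ?_⟩
  · have : 1 ≤ δ * (B * s ^ 2) * (B * s ^ 2) / 2 := by nlinarith
    calc e = 1 * e := by ring
      _ ≤ δ * (B * s ^ 2) * (B * s ^ 2) / 2 * e := by gcongr
      _ = _ := by ring
  · rw [abs_of_pos (by positivity)]
    calc B * s ^ 2 * e * (1 + B * s ^ 2 * e) ≤ B * s ^ 2 * e * (δ * (B * s ^ 2) / 2) := by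
          gcongr
          linarith
      _ = _ := by ring
  · have hnn : 0 ≤ B ^ 2 * s ^ 4 - 2 * B * s ^ 3 := le_trans (by positivity) hlow
    rw [abs_of_nonneg (by positivity)]
    have hle : (B ^ 2 * s ^ 4 - 2 * B * s ^ 3) * e ≤ B ^ 2 * s ^ 4 * e := by gcongr
    refine hle.trans ?_
    have h24 : B ^ 2 * (B ^ 2 * s ^ 4 * e) ≤ B ^ 2 * δ := by
      calc B ^ 2 * (B ^ 2 * s ^ 4 * e) = (B * s) ^ 4 * e := by ring
        _ ≤ 24 := e4
        _ ≤ B ^ 2 * δ := by nlinarith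
    exact le_of_mul_le_mul_left h24 (by positivity)

/-- For `B` sufficiently large, the blending function `f(z) = exp(-B/(z-Λ))` satisfies
`f ≤ δ f''`, `|f'|(1+|f'|) ≤ δ f''` and `|f''| ≤ δ` on `(Λ, 4Λ]`. -/
theorem stmt6 (Λ δ : ℝ) (hΛ : 0 < Λ) (hδ : 0 < δ) :
    ∃ B₀ > (0 : ℝ), ∀ B ≥ B₀, ∀ z ∈ Set.Ioc Λ (4 * Λ),
      Real.exp (-B / (z - Λ)) ≤ δ * deriv (deriv (fun z => Real.exp (-B / (z - Λ)))) z ∧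
      |deriv (fun z => Real.exp (-B / (z - Λ))) z| *
          (1 + |deriv (fun z => Real.exp (-B / (z - Λ))) z|) ≤
        δ * deriv (deriv (fun z => Real.exp (-B / (z - Λ)))) z ∧
      |deriv (deriv (fun z => Real.exp (-B / (z - Λ)))) z| ≤ δ := by
  -- One summand for each lower bound on `B` required by `blend_bounds`.
  refine ⟨2 + 24 / δ + 4 * (3 * Λ) + (3 * Λ) ^ 2 + 4 * (3 * Λ) ^ 2 / δ, by positivity, ?_⟩
  rintro B hB z ⟨hz, hz4⟩
  have ht : 0 < z - Λ := sub_pos.2 hz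
  have htL : z - Λ ≤ 3 * Λ := by linarith
  rw [deriv_deriv_blend Λ B z hz, (hasDerivAt_blend Λ B z ht.ne').deriv]
  set t := z - Λ
  have p1 : 0 < 24 / δ := by positivity
  have p2 : 0 < (3 * Λ) ^ 2 := by positivity
  have p3 : 0 < 4 * (3 * Λ) ^ 2 / δ := by positivity
  have hsq : t ^ 2 ≤ (3 * Λ) ^ 2 := by gcongr
  have q1 : 24 / δ ≤ B := by linarith
  have q3 : 4 * (3 * Λ) ^ 2 / δ ≤ B := by linarith
  rw [div_le_iff₀ hδ] at q1 q3
  have key := blend_bounds B t⁻¹ δ hδ (by positivity) (by linarith) q1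
    (by rw [← div_eq_mul_inv, le_div_iff₀ ht]; linarith)
    (by rw [inv_pow, ← div_eq_mul_inv, le_div_iff₀ (by positivity)]; linarith)
    (by rw [inv_pow, ← div_eq_mul_inv, ← mul_div_assoc, le_div_iff₀ (by positivity)]; linarith)
  simpa only [inv_pow, ← div_eq_mul_inv, ← neg_div] using key
end

section
/- Let N ≥ 1 and let h : EuclideanSpace ℝ (Fin N) → ℝ be differentiable. Let c > 0 and H⁰ > 0 and suppose that ‖∇h(x)‖ ≤ c·h(x)² for every x with h(x) ≥ H⁰. Let γ > 1 and let p₀ satisfy h(p₀) ≥ γ·H⁰. Then for every q with ‖q − p₀‖ ≤ (γ−1)/(c·h(p₀)) one has h(q) ≥ h(p₀)/(1 + c·‖q − p₀‖·h(p₀)) ≥ h(p₀)/γ. -/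
/-!
Restrict `h` to the segment from `p₀` to `q`: `f t = h (p₀ + t (q - p₀))` satisfies
`|f'| ≤ k f²` with `k = c ‖q - p₀‖` wherever `f ≥ H₀`, and the solution of the equality case,
`A / (1 + k A t)` with `A = h p₀`, stays at least `A / γ ≥ H₀` on `[0, 1]`, so `f` should stay
above it. The comparison lemma in Mathlib requires a strict differential inequality, so
for each `s < 1` the steeper barrier `A / (1 + (k / s) A t)` is used on `[0, s]`; its value at
`t = s` is exactly `A / (1 + k A)`. Letting `s → 1` gives the bound at `q`.
-/

open Set Filter Topology

/-- One-dimensional comparison, strictly before the endpoint. -/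
lemma riccati_lower_bound_lt (f f' : ℝ → ℝ) (hf : ∀ t, HasDerivAt f (f' t) t)
    (k H₀ : ℝ) (hk : 0 < k)
    (hbound : ∀ t, H₀ ≤ f t → |f' t| ≤ k * f t ^ 2)
    (hA : 0 < f 0) (hB : H₀ ≤ f 0 / (1 + k * f 0)) (s : ℝ) (hs0 : 0 < s) (hs1 : s < 1) :
    f 0 / (1 + k * f 0) ≤ f s := by
  set A := f 0 with hAdef
  set K := k / s with hK
  have hKpos : 0 < K := by positivity
  have hkK : k < K := by rw [hK, lt_div_iff₀ hs0]; nlinarith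
  have hKs : K * s = k := by rw [hK]; field_simp
  have hden : ∀ t, 0 ≤ t → 0 < 1 + K * A * t := fun t ht => by positivity
  have hBd : ∀ t, 0 ≤ t →
      HasDerivAt (fun t => -(A / (1 + K * A * t))) (K * (A / (1 + K * A * t)) ^ 2) t := by
    intro t ht
    have hne := (hden t ht).ne'
    have h1 : HasDerivAt (fun t => 1 + K * A * t) (K * A) t := by
      simpa using ((hasDerivAt_id t).const_mul (K * A)).const_add 1
    have h2 := ((hasDerivAt_const t A).div h1 hne).neg
    refine h2.congr_deriv ?_
    field_simp
    ring
  have key := image_le_of_deriv_right_lt_deriv_boundary' (f := fun t => -f t)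
    (f' := fun t => -f' t) (a := 0) (b := s)
    (B := fun t => -(A / (1 + K * A * t))) (B' := fun t => K * (A / (1 + K * A * t)) ^ 2)
    (fun t _ => (hf t).neg.continuousAt.continuousWithinAt)
    (fun t _ => (hf t).neg.hasDerivWithinAt)
    (by simp [hAdef])
    (fun t ht => (hBd t ht.1).continuousAt.continuousWithinAt)
    (fun t ht => (hBd t ht.1).hasDerivWithinAt)
    (by
      intro t ht heq
      have heq' : f t = A / (1 + K * A * t) := neg_injective heq
      have hpos : 0 < A / (1 + K * A * t) := div_pos hA (hden t ht.1)
      -- the barrier is decreasing with value `A / (1 + k A)` at `s`, hence is at least `H₀` here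
      have hge : H₀ ≤ f t := by
        rw [heq']
        refine hB.trans (div_le_div_of_nonneg_left hA.le (hden t ht.1) ?_)
        have : K * A * t ≤ K * A * s :=
          mul_le_mul_of_nonneg_left ht.2.le (by positivity)
        nlinarith
      have h1 := (neg_le_abs _).trans (hbound t hge)
      change -f' t < K * (A / (1 + K * A * t)) ^ 2
      rw [heq'] at h1
      exact h1.trans_lt (mul_lt_mul_of_pos_right hkK (by positivity)))
  have h2 := key (right_mem_Icc.2 hs0.le)
  have h3 : K * A * s = k * A := by rw [← hKs]; ring
  simp only [h3] at h2
  linarith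

/-- Local Harnack-type estimate: a gradient bound `‖∇h‖ ≤ c h²` above the threshold `H⁰`
allows comparison of the values of `h` at nearby points. -/
theorem stmt7 (N : ℕ) (hN : 1 ≤ N) (h : EuclideanSpace ℝ (Fin N) → ℝ)
    (hdiff : Differentiable ℝ h) (c H₀ : ℝ) (hc : 0 < c) (hH₀ : 0 < H₀)
    (hgrad : ∀ x, H₀ ≤ h x → ‖gradient h x‖ ≤ c * (h x) ^ 2)
    (γ : ℝ) (hγ : 1 < γ) (p₀ : EuclideanSpace ℝ (Fin N)) (hp₀ : γ * H₀ ≤ h p₀) :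
    ∀ q, ‖q - p₀‖ ≤ (γ - 1) / (c * h p₀) →
      h p₀ / (1 + c * ‖q - p₀‖ * h p₀) ≤ h q ∧
        h p₀ / γ ≤ h p₀ / (1 + c * ‖q - p₀‖ * h p₀) := by
  intro q hq
  have hγ0 : 0 < γ := by linarith
  have hA : 0 < h p₀ := lt_of_lt_of_le (by positivity) hp₀
  have hsecond : h p₀ / γ ≤ h p₀ / (1 + c * ‖q - p₀‖ * h p₀) := by
    refine div_le_div_of_nonneg_left hA.le (by positivity) ?_
    rw [le_div_iff₀ (by positivity)] at hq
    nlinarith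
  refine ⟨?_, hsecond⟩
  rcases eq_or_ne q p₀ with rfl | hne
  · simp
  have hd : 0 < ‖q - p₀‖ := norm_pos_iff.2 (sub_ne_zero.2 hne)
  have hf : ∀ t : ℝ, HasDerivAt (fun t : ℝ => h (p₀ + t • (q - p₀)))
      (inner ℝ (gradient h (p₀ + t • (q - p₀))) (q - p₀)) t := by
    intro t
    have h1 : HasDerivAt (fun t : ℝ => p₀ + t • (q - p₀)) (q - p₀) t := by
      simpa using ((hasDerivAt_id t).smul_const (q - p₀)).const_add p₀
    have h2 := (hdiff (p₀ + t • (q - p₀))).hasGradientAt.hasFDerivAt.comp_hasDerivAt t h1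
    exact h2
  have hlt := riccati_lower_bound_lt _ _ hf (c * ‖q - p₀‖) H₀ (by positivity)
    (by
      intro t ht
      calc _ ≤ ‖gradient h (p₀ + t • (q - p₀))‖ * ‖q - p₀‖ := abs_real_inner_le_norm _ _
        _ ≤ c * (h (p₀ + t • (q - p₀))) ^ 2 * ‖q - p₀‖ := by gcongr; exact hgrad _ ht
        _ = _ := by ring)
    (by simpa using hA)
    (by
      simp only [zero_smul, add_zero]
      exact ((le_div_iff₀ hγ0).2 (by linarith)).trans hsecond)
  simp only [zero_smul, add_zero] at hlt
  have hlim : Tendsto (fun t : ℝ => h (p₀ + t • (q - p₀))) (𝓝[<] 1) (𝓝 (h q)) := by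
    have := (hf 1).continuousAt.tendsto
    simp only [one_smul, add_sub_cancel] at this
    exact this.mono_left nhdsWithin_le_nhds
  refine ge_of_tendsto hlim ?_
  filter_upwards [Ioo_mem_nhdsLT (zero_lt_one (α := ℝ))] with s hs
  exact hlt s hs.1 hs.2
end

section
/- Let N ≥ 1 and let w, z, W, Z : ℝ × EuclideanSpace ℝ (Fin N) → ℝ, with w and z twice continuously differentiable and z(t,x) ≠ 0 everywhere. Write ∂ₜ for the time derivative, ∇ for the spatial gradient, and Δ := Σᵢ ∂²ᵢ for the spatial Laplacian. If ∂ₜw = Δw + W and ∂ₜz = Δz + Z, then the quotient satisfies ∂ₜ(w/z) = Δ(w/z) + (2/z)·⟨∇(w/z), ∇z⟩ + W/z − (w/z²)·Z. -/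
/-!
Put `u = w / z`, which is again `C²` because `z` never vanishes, so that `w = u z`. The Leibniz rule
gives `∂ₜw = u ∂ₜz + z ∂ₜu` and, applied twice in each coordinate direction,
`Δw = u Δz + 2⟨∇u, ∇z⟩ + z Δu` (`spatialLaplacian_mul`). Substituting both heat equations leaves
`z ∂ₜu = z Δu + 2⟨∇u, ∇z⟩ + W - u Z`, and dividing by `z` is the claim. Working with the product
`u z` avoids differentiating a quotient.
-/

/-- Time derivative `∂ₜ f` of a function of `(t, x)`. -/
noncomputable def timeDeriv {N : ℕ} (f : ℝ × EuclideanSpace ℝ (Fin N) → ℝ)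
    (p : ℝ × EuclideanSpace ℝ (Fin N)) : ℝ :=
  deriv (fun s => f (s, p.2)) p.1

/-- Spatial partial derivative `∂ᵢ f` of a function of `(t, x)`. -/
noncomputable def spatialPartial {N : ℕ} (f : ℝ × EuclideanSpace ℝ (Fin N) → ℝ) (i : Fin N)
    (p : ℝ × EuclideanSpace ℝ (Fin N)) : ℝ :=
  deriv (fun s : ℝ => f (p.1, p.2 + s • EuclideanSpace.single i 1)) 0

/-- Spatial Laplacian `Δ f = Σᵢ ∂²ᵢ f` of a function of `(t, x)`. -/
noncomputable def spatialLaplacian {N : ℕ} (f : ℝ × EuclideanSpace ℝ (Fin N) → ℝ)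
    (p : ℝ × EuclideanSpace ℝ (Fin N)) : ℝ :=
  ∑ i, spatialPartial (spatialPartial f i) i p

theorem differentiable_spatialLine {N : ℕ} {f : ℝ × EuclideanSpace ℝ (Fin N) → ℝ}
    (hf : Differentiable ℝ f) (i : Fin N) (p : ℝ × EuclideanSpace ℝ (Fin N)) :
    Differentiable ℝ (fun s : ℝ => f (p.1, p.2 + s • EuclideanSpace.single i (1 : ℝ))) := by
  fun_prop

theorem spatialPartial_eq_fderiv {N : ℕ} {f : ℝ × EuclideanSpace ℝ (Fin N) → ℝ}
    (hf : Differentiable ℝ f) (i : Fin N) :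
    spatialPartial f i = fun p => fderiv ℝ f p (0, EuclideanSpace.single i 1) := by
  funext p
  have hline : HasDerivAt
      (fun s : ℝ => (p.1, p.2 + s • EuclideanSpace.single i (1 : ℝ)))
      ((0 : ℝ), EuclideanSpace.single i (1 : ℝ)) 0 := by
    refine (hasDerivAt_const _ _).prodMk ?_
    simpa using ((hasDerivAt_id (0 : ℝ)).smul_const
      (EuclideanSpace.single i (1 : ℝ))).const_add p.2
  have hfp : HasFDerivAt f (fderiv ℝ f p)
      (p.1, p.2 + (0 : ℝ) • EuclideanSpace.single i (1 : ℝ)) := by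
    simpa using (hf p).hasFDerivAt
  exact (hfp.comp_hasDerivAt 0 hline).deriv

theorem differentiable_spatialPartial {N : ℕ} {f : ℝ × EuclideanSpace ℝ (Fin N) → ℝ}
    (hf : ContDiff ℝ 2 f) (i : Fin N) : Differentiable ℝ (spatialPartial f i) := by
  rw [spatialPartial_eq_fderiv (hf.differentiable (by norm_num))]
  have h : ContDiff ℝ 1 (fderiv ℝ f) := hf.fderiv_right (by norm_num)
  exact (h.differentiable (by norm_num)).clm_apply (differentiable_const _)

theorem spatialPartial_mul {N : ℕ} {f g : ℝ × EuclideanSpace ℝ (Fin N) → ℝ}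
    (hf : Differentiable ℝ f) (hg : Differentiable ℝ g) (i : Fin N)
    (p : ℝ × EuclideanSpace ℝ (Fin N)) :
    spatialPartial (fun q => f q * g q) i p
      = spatialPartial f i p * g p + f p * spatialPartial g i p := by
  have h := deriv_fun_mul (differentiable_spatialLine hf i p 0)
    (differentiable_spatialLine hg i p 0)
  simpa [spatialPartial] using h

theorem spatialPartial_add {N : ℕ} {f g : ℝ × EuclideanSpace ℝ (Fin N) → ℝ}
    (hf : Differentiable ℝ f) (hg : Differentiable ℝ g) (i : Fin N)
    (p : ℝ × EuclideanSpace ℝ (Fin N)) :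
    spatialPartial (fun q => f q + g q) i p = spatialPartial f i p + spatialPartial g i p :=
  deriv_fun_add (differentiable_spatialLine hf i p 0) (differentiable_spatialLine hg i p 0)

theorem spatialLaplacian_mul {N : ℕ} {f g : ℝ × EuclideanSpace ℝ (Fin N) → ℝ}
    (hf : ContDiff ℝ 2 f) (hg : ContDiff ℝ 2 g) (p : ℝ × EuclideanSpace ℝ (Fin N)) :
    spatialLaplacian (fun q => f q * g q) p
      = spatialLaplacian f p * g p + 2 * (∑ i, spatialPartial f i p * spatialPartial g i p)
        + f p * spatialLaplacian g p := by
  have hf1 : Differentiable ℝ f := hf.differentiable (by norm_num)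
  have hg1 : Differentiable ℝ g := hg.differentiable (by norm_num)
  simp only [spatialLaplacian, Finset.sum_mul, Finset.mul_sum, ← Finset.sum_add_distrib]
  refine Finset.sum_congr rfl fun i _ => ?_
  have hf2 := differentiable_spatialPartial hf i
  have hg2 := differentiable_spatialPartial hg i
  rw [funext (spatialPartial_mul hf1 hg1 i), spatialPartial_add (hf2.fun_mul hg1) (hf1.fun_mul hg2),
    spatialPartial_mul hf2 hg1, spatialPartial_mul hf1 hg2]
  ring

theorem timeDeriv_mul {N : ℕ} {f g : ℝ × EuclideanSpace ℝ (Fin N) → ℝ}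
    (hf : Differentiable ℝ f) (hg : Differentiable ℝ g) (p : ℝ × EuclideanSpace ℝ (Fin N)) :
    timeDeriv (fun q => f q * g q) p = timeDeriv f p * g p + f p * timeDeriv g p := by
  have hf' : Differentiable ℝ (fun s : ℝ => f (s, p.2)) := by fun_prop
  have hg' : Differentiable ℝ (fun s : ℝ => g (s, p.2)) := by fun_prop
  exact deriv_fun_mul (hf' p.1) (hg' p.1)

/-- Quotient identity for solutions of inhomogeneous heat equations:
if `∂ₜw = Δw + W` and `∂ₜz = Δz + Z` with `z ≠ 0`, then
`∂ₜ(w/z) = Δ(w/z) + (2/z)⟨∇(w/z), ∇z⟩ + W/z - (w/z²)Z`. -/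
theorem stmt12 (N : ℕ) (hN : 1 ≤ N)
    (w z W Z : ℝ × EuclideanSpace ℝ (Fin N) → ℝ)
    (hw : ContDiff ℝ 2 w) (hz : ContDiff ℝ 2 z) (hz0 : ∀ p, z p ≠ 0)
    (hweq : ∀ p, timeDeriv w p = spatialLaplacian w p + W p)
    (hzeq : ∀ p, timeDeriv z p = spatialLaplacian z p + Z p) :
    ∀ p, timeDeriv (fun q => w q / z q) p
      = spatialLaplacian (fun q => w q / z q) p
        + (2 / z p) * (∑ i, spatialPartial (fun q => w q / z q) i p * spatialPartial z i p)
        + W p / z p - (w p / (z p) ^ 2) * Z p := by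
  intro p
  have hu : ContDiff ℝ 2 (fun q => w q / z q) := hw.div hz hz0
  have huz : w = fun q => (w q / z q) * z q := funext fun q => (div_mul_cancel₀ _ (hz0 q)).symm
  have ht := timeDeriv_mul (hu.differentiable (by norm_num)) (hz.differentiable (by norm_num)) p
  have hL := spatialLaplacian_mul hu hz p
  rw [← huz] at ht hL
  have h0 := hz0 p
  have key := hweq p
  rw [ht, hL, hzeq p] at key
  refine mul_right_cancel₀ h0 ?_
  rw [eq_sub_of_add_eq key]
  field_simp
  ring
end
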